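/- arXiv:2009.00287 — 3 statements merged into one kernel-verified Lean document; each statement's English description precedes it below -/
import Mathlib

section
/- For all integers b ≥ 1, p ≥ 1 and α ≥ 0 with pα ≤ b, the separation number of the odd cycle C_{2p+1} satisfies sep(C_{2p+1}, 2b+α, b) = b + (p+1)α; that is, b + (p+1)α is the largest c ≤ 2b+α for which C_{2p+1} is (2b+α, b, c)-choosable. -/
open SimpleGraph Finset

/-- An `(L,b)`-coloring of `G`: each vertex `v` receives a set `φ v ⊆ L v` with
`|φ v| = b`, and adjacent vertices receive disjoint sets. -/
def IsLbColoring {V : Type*} (G : SimpleGraph V) (L : V → Finset ℕ) (b : ℕ)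
    (φ : V → Finset ℕ) : Prop :=
  (∀ v, φ v ⊆ L v ∧ (φ v).card = b) ∧ ∀ u v, G.Adj u v → φ u ∩ φ v = ∅

/-- `G` is `(a,b,c)`-choosable: every `c`-separating `a`-list assignment admits an
`(L,b)`-coloring. -/
def Choosable {V : Type*} (G : SimpleGraph V) (a b c : ℕ) : Prop :=
  ∀ L : V → Finset ℕ, (∀ v, (L v).card = a) →
    (∀ u v, G.Adj u v → (L u ∩ L v).card ≤ c) →
    ∃ φ, IsLbColoring G L b φ

/-- `G` is `(a,b,c)`-free-choosable: for every `c`-separating `a`-list assignment,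
any precoloring of one vertex by a `b`-subset of its list extends to an `(L,b)`-coloring. -/
def FreeChoosable {V : Type*} (G : SimpleGraph V) (a b c : ℕ) : Prop :=
  ∀ L : V → Finset ℕ, (∀ v, (L v).card = a) →
    (∀ u v, G.Adj u v → (L u ∩ L v).card ≤ c) →
    ∀ (v₀ : V) (C : Finset ℕ), C ⊆ L v₀ → C.card = b →
      ∃ φ, IsLbColoring G L b φ ∧ φ v₀ = C

/-- The separation number `sep(G,a,b)`: the largest `c ≤ a` such that `G` is
`(a,b,c)`-choosable. -/
noncomputable def sep {V : Type*} (G : SimpleGraph V) (a b : ℕ) : ℕ :=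
  sSup {c | c ≤ a ∧ Choosable G a b c}

/-- The free-separation number `fsep(G,a,b)`: the largest `c ≤ a` such that `G` is
`(a,b,c)`-free-choosable. -/
noncomputable def fsep {V : Type*} (G : SimpleGraph V) (a b : ℕ) : ℕ :=
  sSup {c | c ≤ a ∧ FreeChoosable G a b c}

/-!
Call a choice of one color per vertex a slice if it is proper and the neighbors of each vertex `v`
take at most one color out of `L v`. Removing a slice costs each list at most two colors and
contributes one color to each vertex, so lists of size `2 * b` are exhausted by `b` slices. On an
odd cycle whose lists have equal size but are not all equal a slice is found greedily: walk around
the cycle, pick a new color whenever the list changes, and alternate two colors while it stays the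
same. The cycle being odd, some maximal run of equal lists has odd length, so it ends with the color
it started with. This color and the one after the run are new colors, determined by the lists alone,
so the walk closes up.

No color can obstruct this unless it lies in all lists. With lists of size `2 * b + α`, each vertex
may discard `α` colors, which disposes of `(2 * p + 1) * α` common colors. A further excess of `s`
common colors forces, by separation, every vertex to have `s` colors missing from both neighboring
lists, and these can be used at once.

For the upper bound, let all lists share `(2 * p + 1) * α + 2` colors and let each edge have
`b - p * α - 1` colors of its own. A shared color can be used by at most `p` vertices and an edge
color by at most one, which is too little in total.
-/

section ListColoring

variable {V : Type*} {G : SimpleGraph V} {a b c s : ℕ}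

lemma IsLbColoring.mono {L L' : V → Finset ℕ} {φ : V → Finset ℕ} (hφ : IsLbColoring G L b φ)
    (hL : ∀ v, L v ⊆ L' v) : IsLbColoring G L' b φ :=
  ⟨fun v => ⟨(hφ.1 v).1.trans (hL v), (hφ.1 v).2⟩, hφ.2⟩

lemma IsLbColoring.union {L φ ψ : V → Finset ℕ} (hφ : IsLbColoring G L b φ)
    (hψ : IsLbColoring G L s ψ) (hself : ∀ v, Disjoint (φ v) (ψ v))
    (hadj : ∀ u v, G.Adj u v → Disjoint (φ u) (ψ v)) :
    IsLbColoring G L (b + s) fun v => φ v ∪ ψ v := by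
  refine ⟨fun v => ⟨union_subset (hφ.1 v).1 (hψ.1 v).1, ?_⟩, fun u v huv => ?_⟩
  · rw [card_union_of_disjoint (hself v), (hφ.1 v).2, (hψ.1 v).2]
  · rw [← disjoint_iff_inter_eq_empty, disjoint_union_left, disjoint_union_right,
      disjoint_union_right]
    exact ⟨⟨disjoint_iff_inter_eq_empty.2 (hφ.2 u v huv), hadj u v huv⟩,
      (hadj v u huv.symm).symm, disjoint_iff_inter_eq_empty.2 (hψ.2 u v huv)⟩

lemma Choosable.anti_separation {c' : ℕ} (h : Choosable G a b c) (hc : c' ≤ c) :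
    Choosable G a b c' :=
  fun L hL hsep => h L hL fun u v huv => (hsep u v huv).trans hc

lemma Choosable.exists_coloring {ι : Type*} [Countable ι] [DecidableEq ι]
    (h : Choosable G a b c) (L : V → Finset ι) (hL : ∀ v, (L v).card = a)
    (hsep : ∀ u v, G.Adj u v → (L u ∩ L v).card ≤ c) :
    ∃ φ : V → Finset ι, (∀ v, φ v ⊆ L v ∧ (φ v).card = b) ∧
      ∀ u v, G.Adj u v → Disjoint (φ u) (φ v) := by
  obtain ⟨f, hf⟩ := exists_injective_nat ι
  let e : ι ↪ ℕ := ⟨f, hf⟩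
  obtain ⟨ψ, hψ, hdisj⟩ := h (fun v => (L v).map e) (by simpa using hL)
    (by simpa only [← map_inter, card_map] using hsep)
  choose φ hφL hφ using fun v => subset_map_iff.1 (hψ v).1
  refine ⟨φ, fun v => ⟨hφL v, ?_⟩, fun u v huv => ?_⟩
  · rw [← (hψ v).2, hφ v, card_map]
  · rw [← disjoint_map e, ← hφ u, ← hφ v, disjoint_iff_inter_eq_empty]
    exact hdisj u v huv

lemma sep_eq_of_not_choosable_succ (hca : c ≤ a) (hc : Choosable G a b c)
    (hsucc : c < a → ¬ Choosable G a b (c + 1)) : sep G a b = c := by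
  refine IsGreatest.csSup_eq ⟨⟨hca, hc⟩, fun c' ⟨hc'a, hc'⟩ => ?_⟩
  by_contra! hlt
  exact hsucc (hlt.trans_le hc'a) (hc'.anti_separation hlt)

end ListColoring

section PrivateColors

variable {V ι : Type*} [DecidableEq ι] {G : SimpleGraph V}

/-- The colors of `L v` that occur in no list of a neighbor of `v`; such a color can be given to
`v` without restricting any other vertex. -/
def privateColors (G : SimpleGraph V) [G.LocallyFinite] (L : V → Finset ι) (v : V) : Finset ι :=
  L v \ (G.neighborFinset v).biUnion L

lemma disjoint_privateColors [G.LocallyFinite] (L : V → Finset ι) {u v : V} (huv : G.Adj u v) :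
    Disjoint (L u) (privateColors G L v) :=
  disjoint_sdiff.mono_left (subset_biUnion_of_mem L ((G.mem_neighborFinset v u).2 huv.symm))

lemma card_add_degree_mul_le_card_privateColors [G.LocallyFinite] {L : V → Finset ι}
    {F : Finset ι} {v : V} {c : ℕ} (hF : ∀ w, F ⊆ L w)
    (hsep : ∀ w, G.Adj v w → (L v ∩ L w).card ≤ c) :
    (L v).card + G.degree v * F.card ≤ (privateColors G L v).card + F.card + G.degree v * c := by
  have hcover : L v ⊆
      privateColors G L v ∪ F ∪ (G.neighborFinset v).biUnion fun w => (L v ∩ L w) \ F := by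
    intro x hx
    simp only [privateColors, mem_union, mem_sdiff, mem_biUnion, mem_inter]
    grind
  have hshared : ∀ w ∈ G.neighborFinset v, ((L v ∩ L w) \ F).card + F.card ≤ c := fun w hw => by
    rw [card_sdiff_add_card_eq_card (subset_inter (hF v) (hF w))]
    exact hsep w ((G.mem_neighborFinset v w).1 hw)
  have hsum : ∑ w ∈ G.neighborFinset v, ((L v ∩ L w) \ F).card + G.degree v * F.card
      ≤ G.degree v * c := by
    simpa [sum_add_distrib] using sum_le_sum hshared
  calc (L v).card + G.degree v * F.card
      ≤ (privateColors G L v).card + F.card +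
          ∑ w ∈ G.neighborFinset v, ((L v ∩ L w) \ F).card + G.degree v * F.card := by
        gcongr
        refine (card_le_card hcover).trans ((card_union_le _ _).trans ?_)
        exact add_le_add (card_union_le _ _) card_biUnion_le
    _ ≤ (privateColors G L v).card + F.card + G.degree v * c := by
        rw [add_assoc]
        gcongr

lemma IsLbColoring.exists_add_of_subset_privateColors [G.LocallyFinite]
    {L φ R : V → Finset ℕ} {b s : ℕ} (hφ : IsLbColoring G (fun v => L v \ R v) b φ)
    (hR : ∀ v, R v ⊆ privateColors G L v) (hRcard : ∀ v, (R v).card = s) :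
    ∃ ψ, IsLbColoring G L (b + s) ψ := by
  have hRL : ∀ v, R v ⊆ L v := fun v => (hR v).trans sdiff_subset
  have hLR : ∀ u v, G.Adj u v → Disjoint (L u) (R v) := fun u v huv =>
    (disjoint_privateColors L huv).mono_right (hR v)
  have hRcol : IsLbColoring G L s R := ⟨fun v => ⟨hRL v, hRcard v⟩, fun u v huv =>
    disjoint_iff_inter_eq_empty.1 ((hLR u v huv).mono_left (hRL u))⟩
  refine ⟨_, (hφ.mono fun v => sdiff_subset).union hRcol
    (fun v => sdiff_disjoint.mono_left (hφ.1 v).1) fun u v huv => ?_⟩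
  exact (hLR u v huv).mono_left ((hφ.1 u).1.trans sdiff_subset)

end PrivateColors

section CommonColors

variable {V ι : Type*} [Fintype V]

/-- The colors lying in every list; with no vertices at all there are none. -/
def commonColors [DecidableEq ι] (L : V → Finset ι) : Finset ι :=
  (univ.biUnion L).filter fun x => ∀ v, x ∈ L v

lemma mem_commonColors [DecidableEq ι] [Nonempty V] {L : V → Finset ι} {x : ι} :
    x ∈ commonColors L ↔ ∀ v, x ∈ L v := by
  simp only [commonColors, mem_filter, mem_biUnion, mem_univ, true_and, and_iff_right_iff_imp]
  exact fun h => ⟨Classical.arbitrary V, h _⟩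

lemma exists_cover_card_le {α : ℕ} (F : Finset ι) (hF : F.card ≤ Fintype.card V * α) :
    ∃ D : V → Finset ι, (∀ v, (D v).card ≤ α) ∧ ∀ x ∈ F, ∃ v, x ∈ D v := by
  classical
  obtain ⟨f⟩ : Nonempty (F ↪ V × Fin α) :=
    Function.Embedding.nonempty_of_card_le (by simpa using hF)
  refine ⟨fun v => ({x | (f x).1 = v} : Finset F).map (Function.Embedding.subtype _),
    fun v => ?_, fun x hx => ⟨(f ⟨x, hx⟩).1, by simp [hx]⟩⟩
  rw [card_map]
  refine (card_le_card_of_injOn (t := univ) (fun x => (f x).2) (fun _ _ => mem_univ _)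
    fun x hx y hy hxy => ?_).trans_eq (by simp)
  simp only [coe_filter, mem_univ, true_and, Set.mem_ofPred_eq] at hx hy
  exact f.injective (Prod.ext (hx.trans hy.symm) hxy)

end CommonColors

section Regular

variable {V : Type*} [Fintype V] {G : SimpleGraph V} [DecidableRel G.Adj]

lemma two_mul_card_edgeFinset_of_isRegularOfDegree {k : ℕ} (hG : G.IsRegularOfDegree k) :
    2 * G.edgeFinset.card = Fintype.card V * k := by
  rw [← G.sum_degrees_eq_twice_card_edges, sum_congr rfl fun v _ => hG v, sum_const, card_univ,
    smul_eq_mul]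

lemma mul_indepNum_le_card_edgeFinset {k : ℕ} (hG : G.IsRegularOfDegree k) :
    k * G.indepNum ≤ G.edgeFinset.card := by
  classical
  obtain ⟨I, hI, hcard⟩ := G.exists_isNIndepSet_indepNum
  have hdisj : (I : Set V).PairwiseDisjoint fun v => G.incidenceFinset v := fun u hu v hv huv => by
    rw [Function.onFun, ← disjoint_coe, coe_incidenceFinset, coe_incidenceFinset,
      Set.disjoint_iff_inter_eq_empty]
    exact G.incidenceSet_inter_incidenceSet_of_not_adj (hI hu hv huv) huv
  calc k * G.indepNum = ∑ v ∈ I, (G.incidenceFinset v).card := by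
        simp only [card_incidenceFinset_eq_degree, hG _, sum_const, hcard, smul_eq_mul, mul_comm]
    _ = (I.biUnion fun v => G.incidenceFinset v).card := (card_biUnion hdisj).symm
    _ ≤ G.edgeFinset.card := card_le_card (biUnion_subset.2 fun v _ => G.incidenceFinset_subset v)

/-- Lists sharing `m` colors globally, plus `d` further colors for each edge, occurring in the
lists of its two ends only. -/
def incidenceLists [DecidableEq V] (G : SimpleGraph V) [DecidableRel G.Adj] (m d : ℕ) (v : V) :
    Finset (Fin m ⊕ Sym2 V × Fin d) :=
  univ.disjSum (G.incidenceFinset v ×ˢ univ)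

lemma card_incidenceLists [DecidableEq V] (m d : ℕ) (v : V) :
    (incidenceLists G m d v).card = m + G.degree v * d := by
  simp [incidenceLists, card_disjSum, card_product]

lemma card_incidenceLists_inter [DecidableEq V] (m d : ℕ) {u v : V} (huv : G.Adj u v) :
    (incidenceLists G m d u ∩ incidenceLists G m d v).card = m + d := by
  have hedge : G.incidenceFinset u ∩ G.incidenceFinset v = {s(u, v)} := by
    rw [← coe_inj, coe_inter, coe_incidenceFinset, coe_incidenceFinset, coe_singleton]
    exact G.incidenceSet_inter_incidenceSet_of_adj huv
  have hinter : incidenceLists G m d u ∩ incidenceLists G m d v =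
      univ.disjSum (({s(u, v)} : Finset (Sym2 V)) ×ˢ (univ : Finset (Fin d))) := by
    rw [← hedge, inter_product]
    ext (x | x) <;> simp [incidenceLists]
  rw [hinter, card_disjSum, card_product]
  simp

lemma card_mul_le_of_coloring_incidenceLists [DecidableEq V] {m d b : ℕ}
    {φ : V → Finset (Fin m ⊕ Sym2 V × Fin d)}
    (hφ : ∀ v, φ v ⊆ incidenceLists G m d v ∧ (φ v).card = b)
    (hdisj : ∀ u v, G.Adj u v → Disjoint (φ u) (φ v)) :
    Fintype.card V * b ≤ m * G.indepNum + G.edgeFinset.card * d := by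
  let colorClass (x) : Finset V := {v | x ∈ φ v}
  have hnotadj {x u v} (hu : u ∈ colorClass x) (hv : v ∈ colorClass x) : ¬ G.Adj u v :=
    fun huv => Finset.disjoint_left.1 (hdisj u v huv) (mem_filter.1 hu).2 (mem_filter.1 hv).2
  have hglobal (i : Fin m) : (colorClass (.inl i)).card ≤ G.indepNum :=
    IsIndepSet.card_le_indepNum fun u hu v hv _ => hnotadj hu hv
  have hedge (e : Sym2 V × Fin d) : (colorClass (.inr e)).card ≤ 1 := by
    have hinc {v} (hv : v ∈ colorClass (.inr e)) : e.1 ∈ G.incidenceSet v := by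
      simpa [incidenceLists] using (hφ v).1 (mem_filter.1 hv).2
    refine card_le_one.2 fun u hu v hv => by_contra fun huv => hnotadj hu hv ?_
    exact G.adj_of_mem_incidenceSet huv (hinc hu) (hinc hv)
  have hpalette (v : V) : φ v ⊆ univ.disjSum (G.edgeFinset ×ˢ univ) :=
    (hφ v).1.trans (disjSum_mono_right _ (product_subset_product_left (G.incidenceFinset_subset v)))
  calc Fintype.card V * b = ∑ v, (φ v).card := by simp [hφ]
    _ = ∑ x ∈ univ.disjSum (G.edgeFinset ×ˢ univ), (colorClass x).card := by
        simp only [colorClass, card_filter]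
        rw [sum_comm]
        refine sum_congr rfl fun v _ => ?_
        rw [← card_filter, filter_mem_eq_inter, inter_eq_right.2 (hpalette v)]
    _ = ∑ i : Fin m, (colorClass (.inl i)).card +
          ∑ e ∈ G.edgeFinset ×ˢ (univ : Finset (Fin d)), (colorClass (.inr e)).card :=
        sum_disjSum _ _ _
    _ ≤ ∑ _i : Fin m, G.indepNum + ∑ _e ∈ G.edgeFinset ×ˢ (univ : Finset (Fin d)), 1 :=
        add_le_add (sum_le_sum fun i _ => hglobal i) (sum_le_sum fun e _ => hedge e)
    _ = m * G.indepNum + G.edgeFinset.card * d := by simp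

lemma not_choosable_of_lt_card_mul {k m d b : ℕ} (hG : G.IsRegularOfDegree k)
    (hlt : m * G.indepNum + G.edgeFinset.card * d < Fintype.card V * b) :
    ¬ Choosable G (m + k * d) b (m + d) := by
  classical
  intro h
  obtain ⟨φ, hφ, hdisj⟩ := h.exists_coloring (incidenceLists G m d)
    (fun v => by rw [card_incidenceLists, hG v])
    (fun u v huv => (card_incidenceLists_inter m d huv).le)
  exact hlt.not_ge (card_mul_le_of_coloring_incidenceLists hφ hdisj)

end Regular

lemma exists_odd_gap {P : ℕ → Prop} {n s : ℕ} (hP : P.Periodic n) (hn : Odd n) (hs : P s) :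
    ∃ i k, s ≤ i ∧ Odd k ∧ P i ∧ P (i + k) ∧ ∀ j, i < j → j < i + k → ¬ P j := by
  classical
  have hodd : ∃ t, Odd t ∧ P (s + t) := ⟨n, hn, by rwa [hP s]⟩
  let r := Nat.findGreatest (fun r => Even r ∧ P (s + r)) (Nat.find hodd)
  have hr : Even r ∧ P (s + r) :=
    Nat.findGreatest_spec (P := fun r => Even r ∧ P (s + r)) (Nat.zero_le _) ⟨Even.zero, hs⟩
  have hle : r ≤ Nat.find hodd := Nat.findGreatest_le _
  obtain ⟨htodd, ht⟩ := Nat.find_spec hodd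
  refine ⟨s + r, Nat.find hodd - r, Nat.le_add_right s r, Nat.Odd.sub_even hle htodd hr.1, hr.2,
    by rwa [add_assoc, Nat.add_sub_cancel' hle], fun j hij hjk hj => ?_⟩
  obtain ⟨q, rfl⟩ := Nat.exists_eq_add_of_le (show s ≤ j by omega)
  rcases Nat.even_or_odd q with hq | hq
  · exact Nat.findGreatest_is_greatest (P := fun r => Even r ∧ P (s + r)) (show r < q by omega)
      (by omega) ⟨hq, hj⟩
  · exact Nat.find_min hodd (by omega) ⟨hq, hj⟩

section Sequence

variable {ι : Type*} {M : ℕ → Finset ι} {m n : ℕ}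

/-- A choice of one color from each list of a sequence, to be removed together with its
occurrences in the two neighboring lists: consecutive colors differ, and the colors next to
position `i + 1` take away at most one color of `M (i + 1)`. -/
def IsSeqSlice (M : ℕ → Finset ι) (x : ℕ → ι) : Prop :=
  ∀ i, x i ∈ M i ∧ x i ≠ x (i + 1) ∧
    (x i ∈ M (i + 1) → x (i + 2) ∈ M (i + 1) → x i = x (i + 2))

lemma IsSeqSlice.add_period {x : ℕ → ι} (hx : IsSeqSlice M x) (hM : M.Periodic n) :
    IsSeqSlice M fun i => x (i + n) := fun i => by
  have h := hx (i + n)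
  rwa [hM, add_right_comm i n 1, add_right_comm i n 2, hM] at h

section Greedy

variable [DecidableEq ι]

/-- The greedy rule extending a slice with last colors `u`, `v` from the list `A` of `v` to the
next list `B`: a color new in `B` if there is one, chosen independently of `u` and `v`; otherwise
`u` again if possible, and any color but `v` if not. -/
noncomputable def nextColor (A B : Finset ι) (u v : ι) : ι :=
  if h : (B \ A).Nonempty then h.choose
  else if u ∈ B then u
  else if h : (B.erase v).Nonempty then h.choose
  else u

variable {A B : Finset ι} {u v : ι}

lemma nextColor_mem_sdiff (h : (B \ A).Nonempty) : nextColor A B u v ∈ B \ A := by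
  rw [nextColor, dif_pos h]
  exact h.choose_spec

lemma nextColor_eq_of_nonempty_sdiff (h : (B \ A).Nonempty) (u v u' v' : ι) :
    nextColor A B u v = nextColor A B u' v' := by
  rw [nextColor, nextColor, dif_pos h, dif_pos h]

lemma nextColor_self_of_mem (hu : u ∈ A) : nextColor A A u v = u := by
  simp [nextColor, hu]

lemma nextColor_self_mem_erase (hu : u ∉ A) (hA : 1 < A.card) :
    nextColor A A u v ∈ A.erase v := by
  have h : (A.erase v).Nonempty := (one_lt_card_iff_nontrivial.1 hA).erase_nonempty
  rw [nextColor, dif_neg (by simp), if_neg hu, dif_pos h]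
  exact h.choose_spec

lemma nextColor_spec (hcard : A.card = B.card) (hA : 1 < A.card) (hv : v ∈ A) (huv : u ≠ v) :
    nextColor A B u v ∈ B ∧ v ≠ nextColor A B u v ∧
      (u ∈ A → nextColor A B u v ∈ A → u = nextColor A B u v) := by
  by_cases hBA : (B \ A).Nonempty
  · obtain ⟨hmem, hnew⟩ := mem_sdiff.1 (nextColor_mem_sdiff (u := u) (v := v) hBA)
    exact ⟨hmem, fun h => hnew (h ▸ hv), fun _ h => absurd h hnew⟩
  · obtain rfl : B = A :=
      eq_of_subset_of_card_le (by simpa only [sdiff_nonempty, not_not] using hBA) hcard.le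
    by_cases hu : u ∈ B
    · rw [nextColor_self_of_mem hu]
      exact ⟨hu, huv.symm, fun _ _ => rfl⟩
    · obtain ⟨hne, hmem⟩ := mem_erase.1 (nextColor_self_mem_erase (v := v) hu hA)
      exact ⟨hmem, hne.symm, fun h => absurd h hu⟩

/-- The slice produced from its first two colors by `nextColor`. -/
noncomputable def greedySeq (M : ℕ → Finset ι) (x₀ x₁ : ι) : ℕ → ι
  | 0 => x₀
  | 1 => x₁
  | i + 2 => nextColor (M (i + 1)) (M (i + 2)) (greedySeq M x₀ x₁ i) (greedySeq M x₀ x₁ (i + 1))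

variable {x₀ x₁ : ι}

lemma isSeqSlice_greedySeq (hcard : ∀ i, (M i).card = m) (hm : 1 < m) (hx₀ : x₀ ∈ M 0)
    (hx₁ : x₁ ∈ M 1) (hne : x₀ ≠ x₁) : IsSeqSlice M (greedySeq M x₀ x₁) := by
  have hspec (i : ℕ) := nextColor_spec (A := M (i + 1)) (B := M (i + 2))
    (u := greedySeq M x₀ x₁ i) (v := greedySeq M x₀ x₁ (i + 1)) (by simp only [hcard])
    (by rwa [hcard])
  have hpair (i : ℕ) : greedySeq M x₀ x₁ i ∈ M i ∧ greedySeq M x₀ x₁ (i + 1) ∈ M (i + 1) ∧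
      greedySeq M x₀ x₁ i ≠ greedySeq M x₀ x₁ (i + 1) := by
    induction i with
    | zero => exact ⟨hx₀, hx₁, hne⟩
    | succ i ih => exact ⟨ih.2.1, (hspec i ih.2.1 ih.2.2).1, (hspec i ih.2.1 ih.2.2).2.1⟩
  exact fun i => ⟨(hpair i).1, (hpair i).2.2, (hspec i (hpair i).2.1 (hpair i).2.2).2.2⟩

lemma greedySeq_add_period_of_ne (hM : M.Periodic n) (hcard : ∀ i, (M i).card = m) {i : ℕ}
    (hi : 1 ≤ i) (hne : M i ≠ M (i + 1)) :
    greedySeq M x₀ x₁ (i + 1 + n) = greedySeq M x₀ x₁ (i + 1) := by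
  obtain ⟨i, rfl⟩ := Nat.exists_eq_add_of_le' hi
  have hnew : (M (i + 2) \ M (i + 1)).Nonempty := sdiff_nonempty.2 fun h =>
    hne (eq_of_subset_of_card_le h (by simp only [hcard, le_refl])).symm
  rw [show i + 1 + 1 + n = i + n + 2 by omega, greedySeq, greedySeq,
    show i + n + 1 = i + 1 + n by omega, show i + n + 2 = i + 2 + n by omega, hM, hM]
  exact nextColor_eq_of_nonempty_sdiff hnew ..

lemma greedySeq_add_two_mul (hz : IsSeqSlice M (greedySeq M x₀ x₁)) {i t : ℕ}
    (hconst : ∀ j, i ≤ j → j < i + 2 * t → M j = M (j + 1)) :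
    greedySeq M x₀ x₁ (i + 2 * t) = greedySeq M x₀ x₁ i := by
  induction t with
  | zero => rfl
  | succ t ih =>
    have hmem : greedySeq M x₀ x₁ (i + 2 * t) ∈ M (i + 2 * t + 1) :=
      hconst (i + 2 * t) (by omega) (by omega) ▸ (hz _).1
    rw [← ih fun j hij hj => hconst j hij (by omega), mul_add_one, ← add_assoc, greedySeq,
      ← hconst (i + 2 * t + 1) (by omega) (by omega), nextColor_self_of_mem hmem]

lemma greedySeq_add_period_of_le (hM : M.Periodic n) {e : ℕ}
    (h₀ : greedySeq M x₀ x₁ (e + n) = greedySeq M x₀ x₁ e)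
    (h₁ : greedySeq M x₀ x₁ (e + 1 + n) = greedySeq M x₀ x₁ (e + 1)) {j : ℕ} (hj : e ≤ j) :
    greedySeq M x₀ x₁ (j + n) = greedySeq M x₀ x₁ j := by
  suffices greedySeq M x₀ x₁ (j + n) = greedySeq M x₀ x₁ j ∧
      greedySeq M x₀ x₁ (j + 1 + n) = greedySeq M x₀ x₁ (j + 1) from this.1
  induction j, hj using Nat.le_induction with
  | base => exact ⟨h₀, h₁⟩
  | succ j _ ih =>
    refine ⟨ih.2, ?_⟩
    rw [show j + 1 + 1 + n = j + n + 2 by omega, greedySeq, greedySeq, ih.1,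
      show j + n + 1 = j + 1 + n by omega, ih.2, show j + n + 2 = j + 2 + n by omega, hM, hM]

end Greedy

lemma exists_periodic_isSeqSlice (hM : M.Periodic n) (hn : Odd n) (hcard : ∀ i, (M i).card = m)
    (hm : 1 < m) {s : ℕ} (hs : M s ≠ M (s + 1)) : ∃ x, x.Periodic n ∧ IsSeqSlice M x := by
  classical
  have hbreak : Function.Periodic (fun i => M i ≠ M (i + 1)) n := fun i => by
    simp only [add_right_comm i n 1, hM _]
  obtain ⟨i, k, hsi, ⟨t, rfl⟩, hi, hik, hgap⟩ :=
    exists_odd_gap (s := s + n) hbreak hn (by simpa only [hbreak s] using hs)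
  have hconst : ∀ j, i + 1 ≤ j → j < i + 1 + 2 * t → M j = M (j + 1) := fun j hj hjt =>
    not_not.1 (hgap j (by omega) (by omega))
  have hconst' : ∀ j, i + 1 + n ≤ j → j < i + 1 + n + 2 * t → M j = M (j + 1) :=
    fun j hj hjt => by
      obtain ⟨j, rfl⟩ := Nat.exists_eq_add_of_le' (show n ≤ j by omega)
      rw [hM, add_right_comm, hM]
      exact hconst j (by omega) (by omega)
  obtain ⟨x₀, hx₀⟩ : (M 0).Nonempty := card_pos.1 (by rw [hcard]; omega)
  obtain ⟨x₁, hx₁, hne⟩ := exists_mem_ne (s := M 1) (by rwa [hcard]) x₀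
  have hz := isSeqSlice_greedySeq hcard hm hx₀ hx₁ hne.symm
  let z := greedySeq M x₀ x₁
  let e := i + 1 + 2 * t
  have hend : z (e + n) = z e := calc
    z (e + n) = z (i + 1 + n + 2 * t) := congrArg z (add_right_comm ..)
    _ = z (i + 1 + n) := greedySeq_add_two_mul hz hconst'
    _ = z (i + 1) := greedySeq_add_period_of_ne hM hcard (by have := hn.pos; omega) hi
    _ = z e := (greedySeq_add_two_mul hz hconst).symm
  have hnext : z (e + 1 + n) = z (e + 1) :=
    greedySeq_add_period_of_ne hM hcard (by omega) (by rwa [show e = i + (2 * t + 1) by omega])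
  refine ⟨fun j => z (j + e * n), fun j => ?_, hz.add_period (hM.nat_mul e)⟩
  have he : e ≤ j + e * n := (Nat.le_mul_of_pos_right e hn.pos).trans (Nat.le_add_left _ _)
  simpa only [add_right_comm j n] using greedySeq_add_period_of_le hM hend hnext he

end Sequence

section Slice

variable {V ι : Type*} {G : SimpleGraph V}

/-- A choice of one color from each list, different on adjacent vertices, such that at most one
color of `L v` is chosen at the neighbors of `v`. Giving `x v` to each `v` and deleting these
colors from the neighboring lists costs each list at most two colors. -/
def IsSlice (G : SimpleGraph V) (L : V → Finset ι) (x : V → ι) : Prop :=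
  ∀ v, x v ∈ L v ∧ (∀ w, G.Adj v w → x v ≠ x w) ∧
    ∀ w w', G.Adj v w → G.Adj v w' → x w ∈ L v → x w' ∈ L v → x w = x w'

/-- The lists left after `x v` has been used at each vertex `v`. -/
def peeledLists [DecidableEq ι] (G : SimpleGraph V) [G.LocallyFinite] (L : V → Finset ι)
    (x : V → ι) (v : V) : Finset ι :=
  L v \ insert (x v) ((G.neighborFinset v).image x)

lemma IsSlice.card_le_card_peeledLists_add_two [DecidableEq ι] [G.LocallyFinite]
    {L : V → Finset ι} {x : V → ι} (hx : IsSlice G L x) (v : V) :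
    (L v).card ≤ (peeledLists G L x v).card + 2 := by
  let lost := ((G.neighborFinset v).image x).filter (· ∈ L v)
  have hlost : lost.card ≤ 1 := card_le_one.2 fun y hy y' hy' => by
    simp only [lost, mem_filter, mem_image, mem_neighborFinset] at hy hy'
    obtain ⟨⟨w, hw, rfl⟩, hwL⟩ := hy
    obtain ⟨⟨w', hw', rfl⟩, hwL'⟩ := hy'
    exact (hx v).2.2 w w' hw hw' hwL hwL'
  have hcover : L v ⊆ peeledLists G L x v ∪ insert (x v) lost := fun y hy => by
    simp only [peeledLists, lost, mem_union, mem_sdiff, mem_insert, mem_filter]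
    tauto
  calc (L v).card ≤ (peeledLists G L x v).card + (insert (x v) lost).card :=
        (card_le_card hcover).trans (card_union_le _ _)
    _ ≤ (peeledLists G L x v).card + 2 := by
        have := card_insert_le (x v) lost
        omega

lemma IsSlice.exists_isLbColoring_succ [G.LocallyFinite] {L φ : V → Finset ℕ} {x : V → ℕ} {b : ℕ}
    (hx : IsSlice G L x) (hφ : IsLbColoring G (peeledLists G L x) b φ) :
    ∃ ψ, IsLbColoring G L (b + 1) ψ := by
  have hxcol : IsLbColoring G L 1 fun v => {x v} :=
    ⟨fun v => ⟨singleton_subset_iff.2 (hx v).1, card_singleton _⟩, fun u v huv => by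
      rw [← disjoint_iff_inter_eq_empty, disjoint_singleton]
      exact (hx u).2.1 v huv⟩
  have havoid : ∀ v, Disjoint (φ v) (insert (x v) ((G.neighborFinset v).image x)) := fun v =>
    sdiff_disjoint.mono_left (hφ.1 v).1
  refine ⟨_, (hφ.mono fun v => sdiff_subset).union hxcol
    (fun v => (havoid v).mono_right ?_) fun u v huv => (havoid u).mono_right ?_⟩
  · exact singleton_subset_iff.2 (mem_insert_self _ _)
  · exact singleton_subset_iff.2
      (mem_insert_of_mem (mem_image_of_mem x ((G.mem_neighborFinset u v).2 huv)))

end Slice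

section OddCycle

lemma val_eq_of_cycleGraph_adj {n : ℕ} {v w : Fin n} (hvw : (cycleGraph n).Adj v w) :
    w.val = (v.val + 1) % n ∨ w.val = (v.val + (n - 1)) % n := by
  have : NeZero n := ⟨v.pos.ne'⟩
  have succ_of_sub {v w : Fin n} (h : (w - v).val = 1) : w.val = (v.val + 1) % n := by
    rw [← h, ← Fin.val_add, add_sub_cancel]
  refine (cycleGraph_adj'.1 hvw).symm.imp succ_of_sub fun h => ?_
  rw [succ_of_sub h, Nat.mod_add_mod, add_assoc, Nat.add_sub_cancel' v.pos, Nat.add_mod_right,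
    Nat.mod_eq_of_lt w.isLt]

lemma isSlice_cycleGraph_of_periodic {ι : Type*} {n : ℕ} {M : ℕ → Finset ι} {x : ℕ → ι}
    (hM : M.Periodic n) (hxper : x.Periodic n) (hx : IsSeqSlice M x) :
    IsSlice (cycleGraph n) (fun v => M v) (fun v => x v) := by
  intro v
  have hnbr (w) (hvw : (cycleGraph n).Adj v w) : x w = x (v + 1) ∨ x w = x (v + (n - 1)) :=
    (val_eq_of_cycleGraph_adj hvw).imp (fun h => by rw [h, hxper.map_mod_nat])
      fun h => by rw [h, hxper.map_mod_nat]
  have hnext := (hx v).2.1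
  obtain ⟨-, hprev, hmid⟩ := hx (v + (n - 1))
  rw [show v + (n - 1) + 1 = v + n by omega, hxper] at hprev
  rw [show v + (n - 1) + 1 = v + n by omega, show v + (n - 1) + 2 = v + 1 + n by omega,
    hxper, hM] at hmid
  refine ⟨(hx v).1, fun w hvw => ?_, fun w w' hvw hvw' => ?_⟩ <;> beta_reduce
  · obtain h | h := hnbr w hvw <;> rw [h]
    exacts [hnext, hprev.symm]
  · obtain h | h := hnbr w hvw <;> obtain h' | h' := hnbr w' hvw' <;> rw [h, h']
    exacts [fun _ _ => rfl, fun h₁ h₂ => (hmid h₂ h₁).symm, hmid, fun _ _ => rfl]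

lemma exists_isSlice_cycleGraph {ι : Type*} {n m : ℕ} (hn : Odd n) {L : Fin n → Finset ι}
    (hcard : ∀ v, (L v).card = m) (hm : 1 < m) {u v : Fin n} (huv : L u ≠ L v) :
    ∃ x, IsSlice (cycleGraph n) L x := by
  have : NeZero n := ⟨hn.pos.ne'⟩
  let M : ℕ → Finset ι := fun i => L (Fin.ofNat n i)
  have hML : ∀ v : Fin n, M v = L v := fun v => congrArg L (Fin.ofNat_val_eq_self v)
  have hM : M.Periodic n := fun i => congrArg L (Fin.ext (Nat.add_mod_right i n))
  obtain ⟨s, hs⟩ : ∃ s, M s ≠ M (s + 1) := by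
    by_contra! hconst
    have hM₀ (i : ℕ) : M i = M 0 := by
      induction i with
      | zero => rfl
      | succ i ih => rw [← hconst, ih]
    exact huv (by rw [← hML, ← hML, hM₀, hM₀ v])
  obtain ⟨x, hxper, hx⟩ := exists_periodic_isSeqSlice hM hn (fun _ => hcard _) hm hs
  refine ⟨fun v => x v, ?_⟩
  simpa only [hML] using isSlice_cycleGraph_of_periodic hM hxper hx

lemma exists_isLbColoring_of_no_common_color {n b : ℕ} (hn : Odd n) {L : Fin n → Finset ℕ}
    (hL : ∀ v, 2 * b ≤ (L v).card) (hcommon : ∀ x, ∃ v, x ∉ L v) :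
    ∃ φ, IsLbColoring (cycleGraph n) L b φ := by
  induction b generalizing L with
  | zero => exact ⟨fun _ => ∅, fun v => ⟨empty_subset _, card_empty⟩, fun _ _ _ => inter_self _⟩
  | succ b ih =>
    choose M hML hMcard using fun v => exists_subset_card_eq (hL v)
    let v₀ : Fin n := ⟨0, hn.pos⟩
    obtain ⟨y, hy⟩ : (M v₀).Nonempty := card_pos.1 (by rw [hMcard]; omega)
    obtain ⟨v, hv⟩ := hcommon y
    obtain ⟨x, hx⟩ := exists_isSlice_cycleGraph hn hMcard (by omega)
      (fun h => hv (hML v (h ▸ hy)) : M v₀ ≠ M v)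
    have hpeeled : ∀ v, 2 * b ≤ (peeledLists (cycleGraph n) M x v).card := fun v => by
      have := hx.card_le_card_peeledLists_add_two v
      rw [hMcard] at this
      omega
    obtain ⟨φ, hφ⟩ := ih hpeeled fun y =>
      (hcommon y).imp fun v hyv h => hyv (hML v (sdiff_subset h))
    obtain ⟨ψ, hψ⟩ := hx.exists_isLbColoring_succ hφ
    exact ⟨ψ, hψ.mono hML⟩

lemma exists_isLbColoring_of_card_commonColors_le {n b α : ℕ} (hn : Odd n)
    {L : Fin n → Finset ℕ} (hL : ∀ v, 2 * b + α ≤ (L v).card)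
    (hcommon : (commonColors L).card ≤ n * α) : ∃ φ, IsLbColoring (cycleGraph n) L b φ := by
  have : Nonempty (Fin n) := ⟨⟨0, hn.pos⟩⟩
  obtain ⟨D, hDcard, hD⟩ := exists_cover_card_le (V := Fin n) _ (by simpa using hcommon)
  have hrest : ∀ v, 2 * b ≤ (L v \ D v).card := fun v => by
    have := le_card_sdiff (D v) (L v)
    have := hL v
    have := hDcard v
    omega
  have hnone : ∀ x, ∃ v, x ∉ L v \ D v := fun x => by
    by_contra! hx
    obtain ⟨v, hv⟩ := hD x (mem_commonColors.2 fun v => sdiff_subset (hx v))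
    exact (mem_sdiff.1 (hx v)).2 hv
  obtain ⟨φ, hφ⟩ := exists_isLbColoring_of_no_common_color hn hrest hnone
  exact ⟨φ, hφ.mono fun v => sdiff_subset⟩

lemma isRegularOfDegree_cycleGraph {n : ℕ} (hn : 3 ≤ n) :
    (cycleGraph n).IsRegularOfDegree 2 := by
  obtain ⟨q, rfl⟩ := Nat.exists_eq_add_of_le' hn
  exact fun _ => cycleGraph_degree_three_le

lemma choosable_cycleGraph_odd {p : ℕ} (hp : 1 ≤ p) (b α : ℕ) :
    Choosable (cycleGraph (2 * p + 1)) (2 * b + α) b (b + (p + 1) * α) := by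
  intro L hL hsep
  have hregular := isRegularOfDegree_cycleGraph (n := 2 * p + 1) (by omega)
  let F := commonColors L
  have hFL : ∀ v, F ⊆ L v := fun v x hx => mem_commonColors.1 hx v
  let s := F.card - (2 * p + 1) * α
  have hprivate (v) : s ≤ (privateColors (cycleGraph (2 * p + 1)) L v).card := by
    have h := card_add_degree_mul_le_card_privateColors hFL (hsep v)
    rw [hL, hregular v] at h
    refine Nat.sub_le_iff_le_add.2 ?_
    linarith
  have hsb : s ≤ b := by
    obtain ⟨w, hw⟩ := ((cycleGraph (2 * p + 1)).degree_pos_iff_exists_adj 0).1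
      (by rw [hregular 0]; exact two_pos)
    have hF : F.card ≤ b + (p + 1) * α :=
      (card_le_card (subset_inter (hFL 0) (hFL w))).trans (hsep 0 w hw)
    refine Nat.sub_le_iff_le_add.2 (hF.trans ?_)
    gcongr
    omega
  choose R hR hRcard using fun v => exists_subset_card_eq (hprivate v)
  have hrest (v) : 2 * (b - s) + (α + s) ≤ (L v \ R v).card := by
    rw [card_sdiff_of_subset ((hR v).trans sdiff_subset), hL, hRcard]
    omega
  have hmono : commonColors (fun v => L v \ R v) ⊆ F := fun x hx =>
    mem_commonColors.2 fun v => sdiff_subset (mem_commonColors.1 hx v)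
  have hcommon : (commonColors fun v => L v \ R v).card ≤ (2 * p + 1) * (α + s) := calc
    (commonColors fun v => L v \ R v).card ≤ (2 * p + 1) * α + s :=
      (card_le_card hmono).trans (by omega)
    _ ≤ (2 * p + 1) * (α + s) := by
      rw [mul_add]
      gcongr
      exact Nat.le_mul_of_pos_left s (by omega)
  obtain ⟨φ, hφ⟩ :=
    exists_isLbColoring_of_card_commonColors_le (odd_two_mul_add_one p) hrest hcommon
  obtain ⟨ψ, hψ⟩ := hφ.exists_add_of_subset_privateColors hR hRcard
  exact ⟨ψ, by rwa [Nat.sub_add_cancel hsb] at hψ⟩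

lemma not_choosable_cycleGraph_odd {b p α : ℕ} (hp : 1 ≤ p) (hα : p * α < b) :
    ¬ Choosable (cycleGraph (2 * p + 1)) (2 * b + α) b (b + (p + 1) * α + 1) := by
  have hregular := isRegularOfDegree_cycleGraph (n := 2 * p + 1) (by omega)
  have hedges := two_mul_card_edgeFinset_of_isRegularOfDegree hregular
  rw [Fintype.card_fin] at hedges
  have htwo_mul := mul_indepNum_le_card_edgeFinset hregular
  have hindep : (cycleGraph (2 * p + 1)).indepNum ≤ p := by omega
  obtain ⟨d, rfl⟩ := Nat.exists_eq_add_of_lt hα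
  have hcount : ((2 * p + 1) * α + 2) * (cycleGraph (2 * p + 1)).indepNum +
      (cycleGraph (2 * p + 1)).edgeFinset.card * d
        < Fintype.card (Fin (2 * p + 1)) * (p * α + d + 1) := by
    rw [Fintype.card_fin, show (cycleGraph (2 * p + 1)).edgeFinset.card = 2 * p + 1 by omega]
    calc ((2 * p + 1) * α + 2) * (cycleGraph (2 * p + 1)).indepNum + (2 * p + 1) * d
        ≤ ((2 * p + 1) * α + 2) * p + (2 * p + 1) * d := by gcongr
      _ < (2 * p + 1) * (p * α + d + 1) := by linarith
  have hsize : 2 * (p * α + d + 1) + α = (2 * p + 1) * α + 2 + 2 * d := by ring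
  have hshared : p * α + d + 1 + (p + 1) * α + 1 = (2 * p + 1) * α + 2 + d := by ring
  rw [hsize, hshared]
  exact not_choosable_of_lt_card_mul hregular hcount

end OddCycle

theorem sep_odd_cycle_middle (b p α : ℕ) (hb : 1 ≤ b) (hp : 1 ≤ p) (hα : p * α ≤ b) :
    sep (cycleGraph (2 * p + 1)) (2 * b + α) b = b + (p + 1) * α := by
  refine sep_eq_of_not_choosable_succ ?_ (choosable_cycleGraph_odd hp b α) fun hlt => ?_
  · linarith
  · exact not_choosable_cycleGraph_odd hp (by linarith)
end

section
/- For all integers a ≥ b ≥ 1, n ≥ 4 and i ≥ 1, the free-separation numbers of cycles satisfy fsep(C_n, a, b) ≤ fsep(C_{n+i}, a, b). -/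
open SimpleGraph Finset

/-!
Let `m = min b c`. A list assignment of the cycle in which the two edges at one vertex `v` share the
same `m` colors, and every other edge shares colors of its own, leaves too few colors for the other
vertices once `v` receives the `m` colors, unless an inequality between `a`, `b`, `c` and `n`
holds. Conversely, walk around the cycle from the precolored vertex, choosing each color set so as
to be of the least hindrance further on; this succeeds on `n` vertices under a similar inequality.
If `2 * c ≤ a`, all other edges can share `c` colors, and both inequalities read
`2 * m ≤ c + (n - 1) * (a - b - c)`. If `2 * c > a`, they share `a` colors per two consecutive
edges; then `2 * b ≤ n * (a - 2 * b)` is necessary, and `2 * b ≤ (n - 1) * (a - 2 * b)` is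
sufficient, which suffices because passing from `n` to `n + 1` makes up for the difference.
-/

section PathColoring

variable {α : Type*} {L B ψ : ℕ → Finset α} {C S T X : Finset α} {a b c d e k l t N : ℕ}

lemma exists_subset_disjoint_card_eq (h : l + #S ≤ #T) : ∃ U ⊆ T, Disjoint U S ∧ #U = l := by
  classical
  obtain ⟨U, hU, hUcard⟩ := exists_subset_card_eq (s := T \ S) (n := l)
    ((Nat.le_sub_of_add_le h).trans (le_card_sdiff S T))
  exact ⟨U, (subset_sdiff.1 hU).1, (subset_sdiff.1 hU).2, hUcard⟩

/-- `ψ` is an `(L,b)`-coloring of the path on the vertices `0, …, k`. The lists and the color sets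
are indexed by `ℕ`, so that all paths share one type; the values beyond `k` are irrelevant. -/
def IsPathColoring (L : ℕ → Finset α) (b k : ℕ) (ψ : ℕ → Finset α) : Prop :=
  (∀ j ≤ k, ψ j ⊆ L j ∧ #(ψ j) = b) ∧ ∀ j < k, Disjoint (ψ j) (ψ (j + 1))

namespace IsPathColoring

lemma mono (hψ : IsPathColoring L b k ψ) (hlk : l ≤ k) : IsPathColoring L b l ψ :=
  ⟨fun j hj => hψ.1 j (hj.trans hlk), fun j hj => hψ.2 j (hj.trans_le hlk)⟩

lemma update_succ (hψ : IsPathColoring L b k ψ) (hX : X ⊆ L (k + 1)) (hXb : #X = b)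
    (hdisj : Disjoint (ψ k) X) : IsPathColoring L b (k + 1) (Function.update ψ (k + 1) X) := by
  have update_of_le {j : ℕ} (hj : j ≤ k) : Function.update ψ (k + 1) X j = ψ j :=
    Function.update_of_ne (by omega) ..
  refine ⟨fun j hj => ?_, fun j hj => ?_⟩
  · obtain hj | rfl := Nat.le_succ_iff.1 hj
    · simpa only [update_of_le hj] using hψ.1 j hj
    · simpa only [Function.update_self] using ⟨hX, hXb⟩
  · obtain hj | rfl := Nat.lt_succ_iff_lt_or_eq.1 hj
    · simpa only [update_of_le hj.le, update_of_le hj] using hψ.2 j hj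
    · simpa only [update_of_le le_rfl, Function.update_self] using hdisj

variable [DecidableEq α]

-- At most `#(B j)` colors of `B j` are used in total at the adjacent vertices `j` and `j + 1`, so
-- the colors of `B j` used at `j` are lost for `j + 1`.
lemma sum_card_le (hψ : IsPathColoring L b (k + 1) ψ) (hL : ∀ j ≤ k, #(L (j + 1)) ≤ a)
    (hdisj : ∀ j ≤ k, Disjoint (B j) (B (j + 1)))
    (hB : ∀ j ≤ k, B j ∪ B (j + 1) ⊆ L (j + 1)) (h0 : Disjoint (ψ 1) (B 0)) :
    (k + 1) * b + ∑ j ∈ range (k + 2), #(B j) ≤ (k + 1) * a + #(ψ (k + 1) ∩ B (k + 1)) := by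
  have vertex_le {j : ℕ} (hj : j ≤ k) :
      b + #(B j) + #(B (j + 1)) ≤ a + #(ψ (j + 1) ∩ B j) + #(ψ (j + 1) ∩ B (j + 1)) := by
    obtain ⟨hψL, hψb⟩ := hψ.1 (j + 1) (by omega)
    have hunion := (card_le_card (union_subset hψL (hB j hj))).trans (hL j hj)
    have hinter := card_union_le (ψ (j + 1) ∩ B j) (ψ (j + 1) ∩ B (j + 1))
    rw [← inter_union_distrib_left] at hinter
    have := card_union_add_card_inter (ψ (j + 1)) (B j ∪ B (j + 1))
    have := card_union_of_disjoint (hdisj j hj)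
    omega
  have edge_le {j : ℕ} (hj : j ≤ k) : #(ψ j ∩ B j) + #(ψ (j + 1) ∩ B j) ≤ #(B j) := by
    rw [← card_union_of_disjoint
      ((hψ.2 j (by omega)).mono inter_subset_left inter_subset_left)]
    exact card_le_card (union_subset inter_subset_right inter_subset_right)
  induction k with
  | zero =>
    have := vertex_le le_rfl
    have := card_eq_zero.2 (disjoint_iff_inter_eq_empty.1 h0)
    simp only [zero_add, one_mul, sum_range_succ, sum_range_zero] at *
    omega
  | succ k ih =>
    have := ih (hψ.mono (by omega)) (fun j hj => hL j (by omega)) (fun j hj => hdisj j (by omega))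
      (fun j hj => hB j (by omega)) (fun hj => vertex_le (by omega)) (fun hj => edge_le (by omega))
    have := vertex_le le_rfl
    have := edge_le le_rfl
    rw [sum_range_succ, add_one_mul (k + 1), add_one_mul (k + 1)]
    change _ + (_ + #(B (k + 1 + 1))) ≤ _
    omega

end IsPathColoring

variable [DecidableEq α]

/-- Some `(L,b)`-coloring of the path on `0, …, k` that gives `C` to the vertex `0` uses at most
`d` colors of `S` at the vertex `k`. -/
def Avoidable (L : ℕ → Finset α) (b : ℕ) (C : Finset α) (k : ℕ) (S : Finset α) (d : ℕ) : Prop :=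
  ∃ ψ, IsPathColoring L b k ψ ∧ ψ 0 = C ∧ #(ψ k ∩ S) ≤ d

lemma exists_subset_card_eq_card_inter_le (S : Finset α) (h : b ≤ #T) :
    ∃ X ⊆ T, #X = b ∧ #(X ∩ S) ≤ b - #(T \ S) := by
  obtain ⟨U, hU, hUcard⟩ := exists_subset_card_eq (min_le_right b #(T \ S))
  obtain ⟨X, hUX, hXT, hX⟩ :=
    exists_subsuperset_card_eq (hU.trans sdiff_subset) (hUcard.trans_le (min_le_left _ _)) h
  refine ⟨X, hXT, hX, ?_⟩
  have hXS : X ∩ S ⊆ X \ U :=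
    subset_sdiff.2 ⟨inter_subset_left,
      disjoint_of_subset_left inter_subset_right (subset_sdiff.1 hU).2.symm⟩
  have := card_le_card hXS
  rw [card_sdiff_of_subset hUX] at this
  omega

namespace Avoidable

lemma zero (hC : C ⊆ L 0) (hCb : #C = b) (hd : #(C ∩ S) ≤ d) : Avoidable L b C 0 S d := by
  refine ⟨fun _ => C, ⟨fun j hj => ?_, fun j hj => (Nat.not_lt_zero j hj).elim⟩, rfl, hd⟩
  obtain rfl := Nat.le_zero.1 hj
  exact ⟨hC, hCb⟩

lemma mono (h : Avoidable L b C k S d) (hde : d ≤ e) : Avoidable L b C k S e :=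
  let ⟨ψ, hψ, hψ0, hd⟩ := h
  ⟨ψ, hψ, hψ0, hd.trans hde⟩

-- To keep away from `S` at `k + 1`, use the colors of a set `T` disjoint from `S`; as many of them
-- as possible are free if the vertex `k` keeps away from `T`.
lemma succ (hT : Avoidable L b C k T d) (hTL : T ⊆ L (k + 1)) (hTS : Disjoint T S)
    (hL : b + min b #(L k ∩ L (k + 1)) ≤ #(L (k + 1))) :
    Avoidable L b C (k + 1) S (b + d - #T) := by
  obtain ⟨ψ, hψ, hψ0, hd⟩ := hT
  obtain ⟨hψL, hψb⟩ := hψ.1 k le_rfl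
  have hψsucc : #(L (k + 1) ∩ ψ k) ≤ min b #(L k ∩ L (k + 1)) := by
    rw [inter_comm]
    exact le_min (hψb ▸ card_le_card inter_subset_left)
      (card_le_card (inter_subset_inter_right hψL))
  have hfree : b ≤ #(L (k + 1) \ ψ k) := by
    have := card_sdiff_add_card_inter (L (k + 1)) (ψ k)
    omega
  obtain ⟨X, hX, hXb, hXS⟩ := exists_subset_card_eq_card_inter_le S hfree
  refine ⟨_, hψ.update_succ (hX.trans sdiff_subset) hXb (subset_sdiff.1 hX).2.symm, ?_, ?_⟩
  · rwa [Function.update_of_ne (Nat.succ_ne_zero k).symm]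
  · have hTfree : T \ ψ k ⊆ (L (k + 1) \ ψ k) \ S :=
      subset_sdiff.2 ⟨sdiff_subset_sdiff hTL le_rfl, disjoint_of_subset_left sdiff_subset hTS⟩
    have := card_le_card hTfree
    have := card_sdiff_add_card_inter T (ψ k)
    rw [inter_comm] at hd
    rw [Function.update_self]
    omega

end Avoidable

lemma avoidable_of_separating (hL : ∀ k, #(L k) = b + c + t)
    (hsep : ∀ k, #(L k ∩ L (k + 1)) ≤ c) (hC : C ⊆ L 0) (hCb : #C = b) (hS : S ⊆ L (k + 1)) :
    Avoidable L b C k S (min b c - k * t) := by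
  induction k generalizing S with
  | zero =>
    have hCS : #(C ∩ S) ≤ min b c :=
      le_min (hCb ▸ card_le_card inter_subset_left)
        ((card_le_card (inter_subset_inter hC hS)).trans (hsep 0))
    exact .zero hC hCb (by simpa only [zero_mul, tsub_zero] using hCS)
  | succ k ih =>
    have hLS : b + c + t ≤ #(L (k + 1) \ S) + c := by
      have := card_sdiff_add_card_inter (L (k + 1)) S
      have := card_le_card (inter_subset_inter_left hS : L (k + 1) ∩ S ⊆ _)
      have := hsep (k + 1)
      have := hL (k + 1)
      omega
    refine ((ih sdiff_subset).succ sdiff_subset sdiff_disjoint ?_).mono ?_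
    · have := hsep k
      have := hL (k + 1)
      omega
    · rw [add_one_mul]
      omega

-- To keep away from `S`, use `b` colors outside it; to keep those free, use `b + e` other colors
-- one vertex earlier, which gains `e` colors every two vertices.
lemma avoidable_two_mul (hL : ∀ k, #(L k) = 2 * b + e) (hC : C ⊆ L 0) (hCb : #C = b)
    (hS : #S ≤ b + e) : Avoidable L b C (2 * k) S (b - k * e) := by
  induction k generalizing S with
  | zero =>
    have hCS : #(C ∩ S) ≤ b := hCb ▸ card_le_card inter_subset_left
    exact .zero hC hCb (by simpa only [zero_mul, tsub_zero] using hCS)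
  | succ k ih =>
    obtain ⟨T, hTL, hTS, hT⟩ := exists_subset_disjoint_card_eq (S := S) (T := L (2 * k + 2))
      (l := b) (by rw [hL]; omega)
    obtain ⟨U, hUL, hUT, hU⟩ := exists_subset_disjoint_card_eq (S := T) (T := L (2 * k + 1))
      (l := b + e) (by rw [hL]; omega)
    refine (((ih hU.le).succ hUL hUT ?_).succ hTL hTS ?_).mono ?_
    · rw [hL]
      omega
    · rw [hL]
      omega
    · rw [add_one_mul]
      omega

lemma avoidable_zero_of_separating (hL : ∀ k, #(L k) = b + c + t)
    (hsep : ∀ k, #(L k ∩ L (k + 1)) ≤ c) (hclosed : L (N + 2) = L 0) (hC : C ⊆ L 0)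
    (hCb : #C = b) (h : 2 * min b c ≤ c + (N + 1) * t) : Avoidable L b C (N + 1) C 0 := by
  have hLC : b + c + t ≤ #(L (N + 1) \ C) + min b c := by
    have hCL : #(L (N + 1) ∩ C) ≤ min b c :=
      le_min (hCb ▸ card_le_card inter_subset_right)
        ((card_le_card (inter_subset_inter_left (hclosed ▸ hC))).trans (hsep (N + 1)))
    have := card_sdiff_add_card_inter (L (N + 1)) C
    have := hL (N + 1)
    omega
  refine ((avoidable_of_separating hL hsep hC hCb sdiff_subset).succ sdiff_subset
    sdiff_disjoint ?_).mono ?_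
  · have := hsep N
    have := hL (N + 1)
    omega
  · rw [add_one_mul] at h
    omega

lemma avoidable_zero_of_two_mul_le (hL : ∀ k, #(L k) = 2 * b + e) (hC : C ⊆ L 0) (hCb : #C = b)
    (h : 2 * b ≤ N * e) : Avoidable L b C N C 0 := by
  obtain ⟨k, rfl | rfl⟩ := N.even_or_odd'
  · rw [mul_assoc] at h
    exact (avoidable_two_mul hL hC hCb (hCb.trans_le (Nat.le_add_right b e))).mono (by omega)
  · obtain ⟨T, hTL, hTC, hT⟩ := exists_subset_disjoint_card_eq (S := C) (T := L (2 * k + 1))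
      (l := b + e) (by rw [hL]; omega)
    refine ((avoidable_two_mul hL hC hCb hT.le).succ hTL hTC ?_).mono ?_
    · rw [hL]
      omega
    · rw [add_one_mul, mul_assoc] at h
      omega

end PathColoring

section Cycle

variable {a b c e m n t N : ℕ} {w : ℕ → ℕ}

lemma forall_cycleGraph_adj_iff {r : Fin (N + 2) → Fin (N + 2) → Prop}
    (hr : ∀ u v, r u v → r v u) :
    (∀ u v, (cycleGraph (N + 2)).Adj u v → r u v) ↔ ∀ u, r u (u + 1) := by
  simp only [cycleGraph_adj]
  refine ⟨fun h u => h u (u + 1) (.inr (add_sub_cancel_left u 1)), fun h u v => ?_⟩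
  rintro (huv | huv)
  · exact hr v u (sub_eq_iff_eq_add'.1 huv ▸ h v)
  · exact sub_eq_iff_eq_add'.1 huv ▸ h u

lemma forall_fin_val_add_one_iff (r : ℕ → ℕ → Prop) :
    (∀ u : Fin (N + 2), r u ↑(u + 1)) ↔ (∀ k < N + 1, r k (k + 1)) ∧ r (N + 1) 0 := by
  simp only [Fin.forall_fin_succ' (n := N + 1), Fin.coeSucc_eq_succ, Fin.last_add_one,
    Fin.val_castSucc, Fin.val_succ, Fin.val_last, Fin.val_zero, Fin.forall_iff]

lemma freeChoosable_cycleGraph_of_avoidable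
    (H : ∀ (L : ℕ → Finset ℕ) (C : Finset ℕ), (∀ k, #(L k) = a) →
      (∀ k, #(L k ∩ L (k + 1)) ≤ c) → L (N + 2) = L 0 → C ⊆ L 0 → #C = b →
      Avoidable L b C (N + 1) C 0) :
    FreeChoosable (cycleGraph (N + 2)) a b c := by
  intro L hL hsep v₀ C hC hCb
  rw [forall_cycleGraph_adj_iff (fun u v huv => by rwa [inter_comm])] at hsep
  have sep_succ (k : ℕ) : #(L (v₀ + Fin.ofNat (N + 2) k) ∩
      L (v₀ + Fin.ofNat (N + 2) (k + 1))) ≤ c := by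
    have ofNat_succ : Fin.ofNat (N + 2) (k + 1) = Fin.ofNat (N + 2) k + 1 := by
      ext
      simp [Fin.val_add]
    rw [ofNat_succ, ← add_assoc]
    exact hsep _
  obtain ⟨ψ, ⟨hψ, hψdisj⟩, hψ0, hψlast⟩ := H (fun k => L (v₀ + Fin.ofNat (N + 2) k)) C
    (fun k => hL _) sep_succ (by simp) (by simpa using hC) hCb
  have hψcycle : ∀ v : Fin (N + 2), Disjoint (ψ v) (ψ ↑(v + 1)) := by
    refine (forall_fin_val_add_one_iff fun i j => Disjoint (ψ i) (ψ j)).2 ⟨hψdisj, ?_⟩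
    rw [hψ0, disjoint_iff_inter_eq_empty]
    exact card_eq_zero.1 (Nat.le_zero.1 hψlast)
  refine ⟨fun v => ψ (v - v₀).val, ⟨fun v => ?_, ?_⟩, by simpa using hψ0⟩
  · simpa using hψ (v - v₀).val (by omega)
  · rw [forall_cycleGraph_adj_iff (fun u v huv => by rwa [inter_comm])]
    intro u
    beta_reduce
    rw [add_sub_right_comm]
    exact disjoint_iff_inter_eq_empty.1 (hψcycle (u - v₀))

lemma FreeChoosable.avoidable {L : ℕ → Finset ℕ} {C : Finset ℕ}
    (H : FreeChoosable (cycleGraph (N + 2)) a b c) (hL : ∀ k ≤ N + 1, #(L k) = a)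
    (hsep : ∀ k < N + 1, #(L k ∩ L (k + 1)) ≤ c) (hlast : #(L (N + 1) ∩ L 0) ≤ c)
    (hC : C ⊆ L 0) (hCb : #C = b) : Avoidable L b C (N + 1) C 0 := by
  have hsep' : ∀ u v, (cycleGraph (N + 2)).Adj u v → #(L u ∩ L v) ≤ c := by
    rw [forall_cycleGraph_adj_iff (fun u v huv => by rwa [inter_comm])]
    exact (forall_fin_val_add_one_iff fun i j => #(L i ∩ L j) ≤ c).2 ⟨hsep, hlast⟩
  obtain ⟨φ, ⟨hφ, hφdisj⟩, hφ0⟩ :=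
    H (fun v => L v) (fun v => hL v (by omega)) hsep' 0 C hC hCb
  rw [forall_cycleGraph_adj_iff (fun u v huv => by rwa [inter_comm])] at hφdisj
  obtain ⟨ψ, hψ⟩ : ∃ ψ : ℕ → Finset ℕ, ∀ v : Fin (N + 2), ψ v = φ v :=
    ⟨fun k => φ (Fin.ofNat (N + 2) k), fun v => by simp⟩
  simp only [← hψ, ← disjoint_iff_inter_eq_empty] at hφ hφdisj hφ0
  obtain ⟨hψdisj, hψlast⟩ := (forall_fin_val_add_one_iff fun i j => Disjoint (ψ i) (ψ j)).1 hφdisj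
  have hψ0 : ψ 0 = C := hφ0
  refine ⟨ψ, ⟨fun j hj => hφ ⟨j, by omega⟩, hψdisj⟩, hψ0, ?_⟩
  rw [← hψ0, disjoint_iff_inter_eq_empty.1 hψlast, card_empty]

theorem freeChoosable_cycleGraph_of_two_mul_min_le (h : 2 * min b c ≤ c + (N + 1) * t) :
    FreeChoosable (cycleGraph (N + 2)) (b + c + t) b c :=
  freeChoosable_cycleGraph_of_avoidable fun _ _ hL hsep hclosed hC hCb =>
    avoidable_zero_of_separating hL hsep hclosed hC hCb h

theorem freeChoosable_cycleGraph_of_two_mul_le (h : 2 * b ≤ (N + 1) * e) :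
    FreeChoosable (cycleGraph (N + 2)) (2 * b + e) b c :=
  freeChoosable_cycleGraph_of_avoidable fun _ _ hL _ _ hC hCb =>
    avoidable_zero_of_two_mul_le hL hC hCb h

/-- The `i`-th block of `s` colors; blocks with distinct indices are disjoint. -/
def colorBlock (i s : ℕ) : Finset ℕ := (range s).image (Nat.pair i)

lemma mem_colorBlock {i s x : ℕ} :
    x ∈ colorBlock i s ↔ (Nat.unpair x).1 = i ∧ (Nat.unpair x).2 < s := by
  simp only [colorBlock, mem_image, mem_range]
  constructor
  · rintro ⟨k, hk, rfl⟩
    simpa using hk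
  · rintro ⟨rfl, h⟩
    exact ⟨_, h, Nat.pair_unpair x⟩

lemma card_colorBlock (i s : ℕ) : #(colorBlock i s) = s := by
  rw [colorBlock, card_image_of_injective _ fun x y h => (Nat.pair_eq_pair.1 h).2, card_range]

lemma disjoint_colorBlock {i j s t : ℕ} (h : i ≠ j) :
    Disjoint (colorBlock i s) (colorBlock j t) :=
  Finset.disjoint_left.2 fun _ hi hj =>
    h ((mem_colorBlock.1 hi).1.symm.trans (mem_colorBlock.1 hj).1)

lemma colorBlock_subset {i s t : ℕ} (h : s ≤ t) : colorBlock i s ⊆ colorBlock i t :=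
  image_subset_image (range_subset_range.2 h)

/-- The colors shared along the edge from `j` to `j + 1` of the cycle on `0, …, N + 1`, where
`N + 1` is followed by `0`: the two edges at `0` share the same `m` colors, any other edge has its
own block of `w j` colors. -/
def edgeColors (N m : ℕ) (w : ℕ → ℕ) (j : ℕ) : Finset ℕ :=
  if j = 0 ∨ j = N + 1 then colorBlock 0 m else colorBlock j (w j)

/-- Lists on the cycle on `0, …, N + 1` in which adjacent vertices share the colors `edgeColors`;
private colors complete each list to `a` elements. -/
def edgeLists (N a b m : ℕ) (w : ℕ → ℕ) : ℕ → Finset ℕ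
  | 0 => colorBlock 0 b ∪ colorBlock (N + 2) (a - b)
  | j + 1 => edgeColors N m w j ∪ edgeColors N m w (j + 1) ∪ colorBlock (N + 3 + j)
      (a - #(edgeColors N m w j) - #(edgeColors N m w (j + 1)))

lemma mem_edgeColors {j x : ℕ} : x ∈ edgeColors N m w j ↔
    if j = 0 ∨ j = N + 1 then (Nat.unpair x).1 = 0 ∧ (Nat.unpair x).2 < m
    else (Nat.unpair x).1 = j ∧ (Nat.unpair x).2 < w j := by
  rw [edgeColors]
  split_ifs <;> exact mem_colorBlock

lemma card_edgeColors (N m : ℕ) (w : ℕ → ℕ) (j : ℕ) :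
    #(edgeColors N m w j) = if j = 0 ∨ j = N + 1 then m else w j := by
  rw [edgeColors]
  split_ifs <;> exact card_colorBlock ..

lemma card_edgeColors_le (hm : m ≤ c) (hw : ∀ j, w j ≤ c) (j : ℕ) :
    #(edgeColors N m w j) ≤ c := by
  rw [card_edgeColors]
  split_ifs
  exacts [hm, hw j]

lemma sum_card_edgeColors (N m : ℕ) (w : ℕ → ℕ) :
    ∑ j ∈ range (N + 2), #(edgeColors N m w j) = 2 * m + ∑ j ∈ range N, w (j + 1) := by
  have interior : ∑ j ∈ range N, #(edgeColors N m w (j + 1)) = ∑ j ∈ range N, w (j + 1) :=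
    sum_congr rfl fun j hj => by
      rw [card_edgeColors, if_neg (by have := mem_range.1 hj; omega)]
  rw [sum_range_succ, sum_range_succ', interior, card_edgeColors, card_edgeColors,
    if_pos (.inl rfl), if_pos (.inr rfl)]
  omega

lemma disjoint_edgeColors_succ (hN : N ≠ 0) (j : ℕ) :
    Disjoint (edgeColors N m w j) (edgeColors N m w (j + 1)) := by
  rw [Finset.disjoint_left]
  intro x
  simp only [mem_edgeColors]
  grind

lemma card_edgeLists (hN : N ≠ 0) (hba : b ≤ a) (hmw : ∀ j, m + w j ≤ a)
    (hww : ∀ j, w j + w (j + 1) ≤ a) {j : ℕ} (hj : j ≤ N + 1) :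
    #(edgeLists N a b m w j) = a := by
  cases j with
  | zero =>
    rw [edgeLists, card_union_of_disjoint (disjoint_colorBlock (by omega)), card_colorBlock,
      card_colorBlock, Nat.add_sub_cancel' hba]
  | succ j =>
    have shared_le : #(edgeColors N m w j) + #(edgeColors N m w (j + 1)) ≤ a := by
      rw [card_edgeColors, card_edgeColors]
      grind
    have private_disjoint {i : ℕ} (hi : i ≤ N + 1) (s : ℕ) :
        Disjoint (edgeColors N m w i) (colorBlock (N + 3 + j) s) := by
      rw [edgeColors]
      split_ifs <;> exact disjoint_colorBlock (by omega)
    rw [edgeLists, card_union_of_disjoint (disjoint_union_left.2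
      ⟨private_disjoint (by omega) .., private_disjoint hj ..⟩),
      card_union_of_disjoint (disjoint_edgeColors_succ hN j), card_colorBlock]
    omega

lemma edgeLists_inter_succ_subset (hN : 2 ≤ N) {j : ℕ} (hj : j ≤ N) :
    edgeLists N a b m w j ∩ edgeLists N a b m w (j + 1) ⊆ edgeColors N m w j := by
  intro x
  cases j <;>
  · simp only [edgeLists, mem_inter, mem_union, mem_colorBlock, mem_edgeColors]
    grind

lemma edgeLists_last_inter_zero_subset (hN : 2 ≤ N) :
    edgeLists N a b m w (N + 1) ∩ edgeLists N a b m w 0 ⊆ edgeColors N m w (N + 1) := by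
  intro x
  simp only [edgeLists, mem_inter, mem_union, mem_colorBlock, mem_edgeColors]
  grind

-- Two consecutive terms sum to `a`; as the first of each pair is the larger one, an odd number of
-- terms also has at least the average sum.
lemma mul_le_two_mul_sum_add_mod_two_div_two (a N : ℕ) :
    N * a ≤ 2 * ∑ j ∈ range N, (a + (j + 1) % 2) / 2 := by
  suffices N * a + N * a % 2 = 2 * ∑ j ∈ range N, (a + (j + 1) % 2) / 2 by omega
  induction N with
  | zero => simp
  | succ N ih =>
    rw [sum_range_succ, add_one_mul]
    have := Nat.mul_mod N a 2
    obtain hN | hN := N.mod_two_eq_zero_or_one <;> obtain ha | ha := a.mod_two_eq_zero_or_one <;>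
    · rw [hN, ha] at this
      omega

namespace FreeChoosable

lemma sum_weights_le (H : FreeChoosable (cycleGraph (N + 2)) a b c) (hN : 2 ≤ N) (hba : b ≤ a)
    (hmb : m ≤ b) (hmc : m ≤ c) (hwc : ∀ j, w j ≤ c) (hmw : ∀ j, m + w j ≤ a)
    (hww : ∀ j, w j + w (j + 1) ≤ a) :
    b + m ≤ a ∧ (N + 1) * b + 2 * m + ∑ j ∈ range N, w (j + 1) ≤ (N + 1) * a := by
  have hE := card_edgeColors_le (N := N) hmc hwc
  have hE0 : edgeColors N m w 0 ⊆ colorBlock 0 b := by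
    simpa [edgeColors] using colorBlock_subset hmb
  have hElast : edgeColors N m w (N + 1) ⊆ colorBlock 0 b := by
    simpa [edgeColors] using colorBlock_subset hmb
  obtain ⟨ψ, hψ, hψ0, hψlast⟩ := H.avoidable
    (fun j hj => card_edgeLists (by omega) hba hmw hww hj)
    (fun j hj => (card_le_card (edgeLists_inter_succ_subset hN (by omega))).trans (hE j))
    ((card_le_card (edgeLists_last_inter_zero_subset hN)).trans (hE _))
    subset_union_left (card_colorBlock 0 b)
  have hfirst : Disjoint (ψ 1) (edgeColors N m w 0) :=
    disjoint_of_subset_right hE0 (hψ0 ▸ hψ.2 0 (by omega)).symm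
  have sum_le {k : ℕ} (hk : k ≤ N) :=
    (hψ.mono (Nat.succ_le_succ hk)).sum_card_le (B := edgeColors N m w) (a := a)
      (fun j hj => (card_edgeLists (by omega) hba hmw hww (by omega)).le)
      (fun j _ => disjoint_edgeColors_succ (by omega) j) (fun j _ => subset_union_left) hfirst
  constructor
  · have := sum_le (Nat.zero_le N)
    have := card_le_card (inter_subset_right : ψ 1 ∩ edgeColors N m w 1 ⊆ _)
    have hE0card : #(edgeColors N m w 0) = m := (card_edgeColors N m w 0).trans (if_pos (.inl rfl))
    simp only [zero_add, one_mul, sum_range_succ, sum_range_zero, hE0card] at *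
    omega
  · have hlast := (card_le_card (inter_subset_inter_left hElast)).trans hψlast
    have := sum_le le_rfl
    rw [sum_card_edgeColors] at this
    omega

lemma add_min_le (H : FreeChoosable (cycleGraph (N + 2)) a b c) (hN : 2 ≤ N) (hba : b ≤ a) :
    b + min b c ≤ a :=
  (H.sum_weights_le (w := fun _ => 0) hN hba (min_le_left b c) (min_le_right b c)
    (fun _ => Nat.zero_le c) (fun _ => (min_le_left b c).trans hba) (fun _ => Nat.zero_le a)).1

theorem two_mul_min_le (H : FreeChoosable (cycleGraph (N + 2)) (b + c + t) b c) (hN : 2 ≤ N)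
    (hc : c ≤ b + t) : 2 * min b c ≤ c + (N + 1) * t := by
  have h := (H.sum_weights_le (w := fun _ => c) hN (by omega) (min_le_left b c)
    (min_le_right b c) (fun _ => le_rfl) (fun _ => by omega) (fun _ => by omega)).2
  rw [sum_const, card_range, smul_eq_mul] at h
  linarith

theorem two_mul_le (H : FreeChoosable (cycleGraph (N + 2)) (2 * b + e) b c) (hN : 2 ≤ N)
    (hc : 2 * b + e < 2 * c) : 2 * b ≤ (N + 2) * e := by
  have h := (H.sum_weights_le (m := b) (w := fun j => (2 * b + e + j % 2) / 2) hN (by omega)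
    le_rfl (by omega) (fun j => by omega) (fun j => by omega) (fun j => by omega)).2
  have := mul_le_two_mul_sum_add_mod_two_div_two (2 * b + e) N
  linarith

theorem cycleGraph_add {i : ℕ} (H : FreeChoosable (cycleGraph n) a b c) (hba : b ≤ a)
    (hn : 4 ≤ n) (hi : 1 ≤ i) : FreeChoosable (cycleGraph (n + i)) a b c := by
  obtain ⟨N, rfl⟩ : ∃ N, n = N + 2 := ⟨n - 2, by omega⟩
  have hN : 2 ≤ N := by omega
  have hmin := H.add_min_le hN hba
  rw [add_right_comm]
  obtain hc | hc := le_or_gt (2 * c) a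
  · obtain ⟨t, rfl⟩ : ∃ t, a = b + c + t := Nat.exists_eq_add_of_le (by omega)
    refine freeChoosable_cycleGraph_of_two_mul_min_le ((H.two_mul_min_le hN (by omega)).trans ?_)
    gcongr
    omega
  · obtain ⟨e, rfl⟩ : ∃ e, a = 2 * b + e := Nat.exists_eq_add_of_le (by omega)
    refine freeChoosable_cycleGraph_of_two_mul_le
      ((H.two_mul_le hN hc).trans (Nat.mul_le_mul_right e (by omega)))

end FreeChoosable

end Cycle

theorem fsep_cycle_mono (a b n i : ℕ) (hb : 1 ≤ b) (hba : b ≤ a) (hn : 4 ≤ n)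
    (hi : 1 ≤ i) :
    fsep (cycleGraph n) a b ≤ fsep (cycleGraph (n + i)) a b :=
  csSup_le_csSup' ⟨a, fun _ hc => hc.1⟩ fun _ hc => ⟨hc.1, hc.2.cycleGraph_add hba hn hi⟩
end

section
/- For all integers a ≥ b ≥ 1 and every integer p ≥ 3, there exists a finite connected cactus G of girth p such that sep(G, a, b) = fsep(G, a, b). -/
open SimpleGraph Finset

/-- A cactus: a connected graph in which every edge belongs to at most one cycle
(any two cycles sharing an edge have the same edge set). -/
def IsCactus {V : Type*} (G : SimpleGraph V) : Prop :=
  G.Connected ∧ ∀ (u v : V) (p : G.Walk u u) (q : G.Walk v v),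
    p.IsCycle → q.IsCycle → (∃ e, e ∈ p.edges ∧ e ∈ q.edges) →
      ∀ e, e ∈ p.edges ↔ e ∈ q.edges

/-!
Glue `a.choose b` copies of the `p`-cycle at one vertex `r`. A cycle cannot leave a copy and come
back without visiting `r` twice, so the cycles of this bouquet are exactly its petals.

Suppose the bouquet is `(a,b,c)`-choosable, let `L` be a list assignment of the cycle, and let
`C ⊆ L r` have size `b`. In the `j`-th petal use the lists `σ j • L`, where the permutation `σ j`
preserves `L r` and moves `C` to the `j`-th of the `a.choose b` many `b`-subsets of `L r`. Whatever
set a coloring of the bouquet assigns to `r`, it is `σ j • C` for some `j`, and undoing `σ j` on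
that petal gives a coloring of the cycle extending `C`. Since the cycle is vertex-transitive, it is
free-choosable, and then so is the bouquet: color the petal of the precolored vertex first and
extend from `r` to the others.
-/

open scoped Pointwise

section Coloring

variable {V V' : Type*} {G : SimpleGraph V} {G' : SimpleGraph V'} {L φ : V → Finset ℕ}
  {a b c : ℕ}

/-- A `c`-separating `a`-list assignment of `G`. -/
structure IsSeparatingList (G : SimpleGraph V) (a c : ℕ) (L : V → Finset ℕ) : Prop where
  card_eq : ∀ v, #(L v) = a
  card_inter_le : ∀ u v, G.Adj u v → #(L u ∩ L v) ≤ c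

/-- `(a,b,c)`-free-choosability with the precolored vertex fixed to be `v`. -/
def FreeChoosableAt (G : SimpleGraph V) (v : V) (a b c : ℕ) : Prop :=
  ∀ L, IsSeparatingList G a c L → ∀ C ⊆ L v, #C = b → ∃ φ, IsLbColoring G L b φ ∧ φ v = C

lemma freeChoosable_iff_forall_freeChoosableAt :
    FreeChoosable G a b c ↔ ∀ v, FreeChoosableAt G v a b c :=
  ⟨fun h v L hL => h L hL.card_eq hL.card_inter_le v,
    fun h L hcard hinter v => h v L ⟨hcard, hinter⟩⟩

lemma FreeChoosable.choosable [Nonempty V] (hba : b ≤ a) (h : FreeChoosable G a b c) :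
    Choosable G a b c := by
  intro L hcard hinter
  obtain ⟨v⟩ := ‹Nonempty V›
  obtain ⟨C, hC, hCb⟩ := exists_subset_card_eq (hba.trans (hcard v).ge)
  obtain ⟨φ, hφ, -⟩ := h L hcard hinter v C hC hCb
  exact ⟨φ, hφ⟩

lemma IsSeparatingList.comp {L : V' → Finset ℕ} (hL : IsSeparatingList G' a c L) (f : G →g G') :
    IsSeparatingList G a c (L ∘ f) :=
  ⟨fun v => hL.card_eq (f v), fun _ _ huv => hL.card_inter_le _ _ (f.map_adj huv)⟩

lemma IsLbColoring.comp {L φ : V' → Finset ℕ} (hφ : IsLbColoring G' L b φ) (f : G →g G') :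
    IsLbColoring G (L ∘ f) b (φ ∘ f) :=
  ⟨fun v => hφ.1 (f v), fun _ _ huv => hφ.2 _ _ (f.map_adj huv)⟩

lemma IsSeparatingList.smul (hL : IsSeparatingList G a c L) (σ : Equiv.Perm ℕ) :
    IsSeparatingList G a c (σ • L) where
  card_eq v := by rw [Pi.smul_apply, card_smul_finset, hL.card_eq]
  card_inter_le u v huv := by
    rw [Pi.smul_apply, Pi.smul_apply, ← smul_finset_inter, card_smul_finset]
    exact hL.card_inter_le u v huv

lemma IsLbColoring.smul (hφ : IsLbColoring G L b φ) (σ : Equiv.Perm ℕ) :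
    IsLbColoring G (σ • L) b (σ • φ) := by
  refine ⟨fun v => ⟨smul_finset_subset_smul_finset (hφ.1 v).1, ?_⟩, fun u v huv => ?_⟩
  · rw [Pi.smul_apply, card_smul_finset, (hφ.1 v).2]
  · rw [Pi.smul_apply, Pi.smul_apply, ← smul_finset_inter, hφ.2 u v huv, smul_finset_empty]

lemma FreeChoosableAt.of_iso {v : V} (h : FreeChoosableAt G v a b c) (f : G ≃g G') :
    FreeChoosableAt G' (f v) a b c := by
  intro L hL C hC hCb
  obtain ⟨φ, hφ, hφv⟩ := h (L ∘ f) (hL.comp f.toHom) C hC hCb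
  refine ⟨φ ∘ f.symm, ?_, by simp [hφv]⟩
  simpa [Function.comp_def] using hφ.comp f.symm.toHom

lemma FreeChoosableAt.freeChoosable {r : V} (hG : ∀ v, ∃ f : G ≃g G, f r = v)
    (h : FreeChoosableAt G r a b c) : FreeChoosable G a b c := by
  refine freeChoosable_iff_forall_freeChoosableAt.2 fun v => ?_
  obtain ⟨f, rfl⟩ := hG v
  exact h.of_iso f

end Coloring

lemma exists_perm_smul_eq_and_smul_eq {α : Type*} [DecidableEq α] {S C D : Finset α}
    (hC : C ⊆ S) (hD : D ⊆ S) (h : #C = #D) :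
    ∃ σ : Equiv.Perm α, σ • S = S ∧ σ • C = D := by
  obtain ⟨τ, hτ⟩ := Equiv.Perm.exists_map_finset_eq (C.subtype (· ∈ S)) (D.subtype (· ∈ S)) (by
    rw [card_subtype, card_subtype, filter_true_of_mem fun _ hx => hC hx,
      filter_true_of_mem fun _ hx => hD hx, h])
  have smul_map (T : Finset S) : Equiv.Perm.ofSubtype τ • T.map (.subtype _) =
      (T.map τ.toEmbedding).map (.subtype _) := by
    simp only [smul_finset_def, map_eq_image, image_image, Function.comp_def,
      Equiv.Perm.smul_def, Function.Embedding.subtype_apply, Equiv.Perm.ofSubtype_apply_coe,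
      Equiv.coe_toEmbedding]
  refine ⟨Equiv.Perm.ofSubtype τ, ?_, ?_⟩
  · have h_univ := smul_map univ
    rwa [map_univ_equiv, univ_eq_attach, attach_map_val] at h_univ
  · simpa only [hτ, subtype_map_of_mem fun _ hx => hC hx, subtype_map_of_mem fun _ hx => hD hx]
      using smul_map (C.subtype (· ∈ S))

section Cycles

variable {V V' : Type*} {G : SimpleGraph V} {G' : SimpleGraph V'} {u : V} {p : G.Walk u u}

lemma isCycle_map_of_injOn {f : G →g G'} (hp : p.IsCycle)
    (hf : Set.InjOn f {v | v ∈ p.support}) : (p.map f).IsCycle := by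
  have hnil : ¬ (p.map f).Nil := by simpa using hp.not_nil
  refine Walk.isCycle_iff_isPath_tail_and_le_length.2 ⟨?_, by simpa using hp.three_le_length⟩
  rw [Walk.isPath_def, Walk.support_tail_of_not_nil _ hnil, Walk.support_map, ← List.map_tail]
  exact hp.support_nodup.map_on fun x hx y hy =>
    hf (List.mem_of_mem_tail hx) (List.mem_of_mem_tail hy)

lemma mem_support_of_isCycles [LocallyFinite G] (hG : G.Preconnected) (hcycles : G.IsCycles)
    (hp : p.IsCycle) (v : V) : v ∈ p.support := by
  by_contra hv
  obtain ⟨q⟩ := hG u v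
  obtain ⟨d, -, hfst, hsnd⟩ :=
    q.exists_boundary_dart {x | x ∈ p.support} p.start_mem_support hv
  have hadj :=
    (hp.adj_toSubgraph_iff_of_isCycles hcycles (p.mem_verts_toSubgraph.2 hfst) d.snd).2 d.adj
  exact hsnd (p.mem_verts_toSubgraph.1 hadj.snd_mem)

lemma mem_edges_iff_of_isCycles [LocallyFinite G] (hG : G.Preconnected) (hcycles : G.IsCycles)
    (hp : p.IsCycle) (e : Sym2 V) : e ∈ p.edges ↔ e ∈ G.edgeSet := by
  induction e with
  | h x y =>
    have hx := p.mem_verts_toSubgraph.2 (mem_support_of_isCycles hG hcycles hp x)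
    rw [← Walk.adj_toSubgraph_iff_mem_edges, hp.adj_toSubgraph_iff_of_isCycles hcycles hx,
      mem_edgeSet]

lemma IsCactus.of_isCycles [LocallyFinite G] (hG : G.Connected) (hcycles : G.IsCycles) :
    IsCactus G := by
  refine ⟨hG, fun u v p q hp hq _ e => ?_⟩
  rw [mem_edges_iff_of_isCycles hG.preconnected hcycles hp,
    mem_edges_iff_of_isCycles hG.preconnected hcycles hq]

lemma isHamiltonianCycle_of_isCycles [LocallyFinite G] [DecidableEq V] (hG : G.Preconnected)
    (hcycles : G.IsCycles) (hp : p.IsCycle) : p.IsHamiltonianCycle := by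
  refine Walk.isHamiltonianCycle_iff_isCycle_and_support_count_tail_eq_one.2 ⟨hp, fun v => ?_⟩
  refine List.count_eq_one_of_mem hp.support_nodup ?_
  rcases p.mem_support_iff.1 (mem_support_of_isCycles hG hcycles hp v) with rfl | hv
  · exact p.end_mem_tail_support hp.not_nil
  · exact hv

lemma egirth_eq_card_of_isCycles [Fintype V] (hG : G.Preconnected) (hcycles : G.IsCycles)
    (hcyclic : ¬ G.IsAcyclic) : G.egirth = Fintype.card V := by
  classical
  obtain ⟨u, p, hp, hlength⟩ := exists_egirth_eq_length.2 hcyclic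
  rw [hlength, (isHamiltonianCycle_of_isCycles hG hcycles hp).length_eq]

end Cycles

section CycleGraph

variable {n : ℕ}

lemma exists_circulantGraph_iso_apply_eq {A : Type*} [AddGroup A] (s : Set A) (x y : A) :
    ∃ f : circulantGraph s ≃g circulantGraph s, f x = y :=
  ⟨⟨Equiv.addRight (-x + y), by simp [circulantGraph_adj]⟩, by simp⟩

lemma isCycles_cycleGraph : (cycleGraph (n + 3)).IsCycles := by
  intro v _
  rw [Set.ncard_eq_toFinset_card', ← neighborFinset, card_neighborFinset_eq_degree,
    cycleGraph_degree_three_le]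

lemma isCactus_cycleGraph : IsCactus (cycleGraph (n + 3)) :=
  .of_isCycles cycleGraph_connected isCycles_cycleGraph

lemma egirth_cycleGraph : (cycleGraph (n + 3)).egirth = (n + 3 : ℕ) := by
  rw [egirth_eq_card_of_isCycles cycleGraph_preconnected isCycles_cycleGraph
    fun h => h _ cycleGraph.isCycle_cycle, Fintype.card_fin]

end CycleGraph

/-- The vertices of a bouquet: copies of `W`, indexed by `ι` and glued together at `r`. The
common point is `none`. -/
abbrev Bouquet {W : Type*} (r : W) (ι : Type*) := Option (ι × {w : W // w ≠ r})

namespace Bouquet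

variable {W ι α : Type*} {r u v : W} {i j : ι} {x y z : Bouquet r ι}

/-- The map out of a bouquet given by the maps `f i` on the copies of `W`, which are meant to take
the common value `c` at `r`. -/
def glue (r : W) (c : α) (f : ι → W → α) : Bouquet r ι → α :=
  fun x => x.elim c fun y => f y.1 y.2

/-- The map from a bouquet to `W` identifying all the copies. -/
def fold (r : W) (ι : Type*) : Bouquet r ι → W :=
  glue r r fun _ w => w

variable [DecidableEq W]

/-- The inclusion of the `i`-th copy of `W` into a bouquet. -/
def petal (r : W) (i : ι) (w : W) : Bouquet r ι :=
  if h : w = r then none else some (i, ⟨w, h⟩)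

@[simp]
lemma petal_root (r : W) (i : ι) : petal r i r = none := dif_pos rfl

lemma petal_of_ne (h : u ≠ r) : petal r i u = some (i, ⟨u, h⟩) := dif_neg h

lemma exists_petal_eq [Nonempty ι] (x : Bouquet r ι) : ∃ i w, petal r i w = x := by
  rcases x with _ | ⟨i, w, hw⟩
  · exact ⟨Classical.arbitrary ι, r, petal_root r _⟩
  · exact ⟨i, w, petal_of_ne hw⟩

lemma glue_petal {c : α} {f : ι → W → α} (hf : ∀ i, f i r = c) (i : ι) (w : W) :
    glue r c f (petal r i w) = f i w := by
  by_cases hw : w = r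
  · subst hw
    rw [petal_root, hf, glue, Option.elim_none]
  · rw [petal_of_ne hw, glue, Option.elim_some]

lemma glue_comp_petal {c : α} {f : ι → W → α} (hf : ∀ i, f i r = c) (i : ι) :
    glue r c f ∘ petal r i = f i :=
  funext (glue_petal hf i)

lemma fold_leftInverse_petal (r : W) (i : ι) : Function.LeftInverse (fold r ι) (petal r i) :=
  glue_petal (f := fun _ w => w) (fun _ => rfl) i

lemma fold_injOn_range_petal (r : W) (i : ι) : (Set.range (petal r i)).InjOn (fold r ι) :=
  ((fold_leftInverse_petal r i).comp_eq_id ▸ Function.injective_id).injOn_range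

lemma index_eq_of_petal_eq (h : petal r i u = petal r j v) (h_none : petal r i u ≠ none) :
    i = j := by
  have hu : u ≠ r := by
    rintro rfl
    exact h_none (petal_root u i)
  obtain rfl : u = v := by
    simpa only [fold_leftInverse_petal _ _ _] using congrArg (fold r ι) h
  simpa [petal_of_ne hu] using h

end Bouquet

section BouquetGraph

variable {W ι : Type*} [DecidableEq W] {H : SimpleGraph W} {r : W} {i j : ι}
  {x y : Bouquet r ι} {a b c : ℕ}

open Bouquet

/-- The bouquet of copies of the graph `H`, indexed by `ι` and glued together at `r`. -/
def bouquet (H : SimpleGraph W) (r : W) (ι : Type*) : SimpleGraph (Bouquet r ι) :=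
  ⨆ i, H.map (petal r i)

lemma bouquet_adj :
    (bouquet H r ι).Adj x y ↔ ∃ i u v, H.Adj u v ∧ petal r i u = x ∧ petal r i v = y := by
  simp only [bouquet, iSup_adj]
  refine exists_congr fun i => ?_
  exact map_adj ⟨petal r i, (fold_leftInverse_petal r i).injective⟩ H x y

/-- The inclusion of the `i`-th copy of `H` as a graph homomorphism. -/
def petalHom (H : SimpleGraph W) (r : W) (i : ι) : H →g bouquet H r ι where
  toFun := petal r i
  map_rel' huv := bouquet_adj.2 ⟨i, _, _, huv, rfl, rfl⟩

/-- The identification of all the copies of `H` as a graph homomorphism. -/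
def foldHom (H : SimpleGraph W) (r : W) (ι : Type*) : bouquet H r ι →g H where
  toFun := fold r ι
  map_rel' hxy := by
    obtain ⟨i, u, v, huv, rfl, rfl⟩ := bouquet_adj.1 hxy
    simpa only [fold_leftInverse_petal r i _] using huv

lemma isContained_bouquet [Nonempty ι] : H ⊑ bouquet H r ι :=
  ⟨petalHom H r (Classical.arbitrary ι), (fold_leftInverse_petal r _).injective⟩

lemma connected_bouquet [Nonempty ι] (hH : H.Connected) :
    (bouquet H r ι).Connected := by
  have reachable_none (x) : (bouquet H r ι).Reachable none x := by
    obtain ⟨i, w, rfl⟩ := exists_petal_eq x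
    simpa [petalHom] using (hH.preconnected r w).map (petalHom H r i)
  exact ⟨fun x y => (reachable_none x).symm.trans (reachable_none y)⟩

lemma mem_range_petal_of_bouquet_adj (hxy : (bouquet H r ι).Adj x y)
    (hx : x ∈ Set.range (petal r i)) (hx₀ : x ≠ none) : y ∈ Set.range (petal r i) := by
  obtain ⟨j, u, v, -, rfl, rfl⟩ := bouquet_adj.1 hxy
  obtain ⟨u', hu'⟩ := hx
  exact ⟨v, by rw [index_eq_of_petal_eq hu'.symm hx₀]⟩

lemma mem_range_petal_of_mem_support (p : (bouquet H r ι).Walk x y)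
    (hx : x ∈ Set.range (petal r i)) (hp : none ∉ p.support.dropLast) :
    ∀ z ∈ p.support, z ∈ Set.range (petal r i) := by
  induction p with
  | nil => simpa using hx
  | cons hxy q ih =>
    rw [Walk.support_cons, List.dropLast_cons_of_ne_nil q.support_ne_nil, List.mem_cons,
      not_or] at hp
    rw [Walk.support_cons, List.forall_mem_cons]
    exact ⟨hx, ih (mem_range_petal_of_bouquet_adj hxy hx (Ne.symm hp.1)) hp.2⟩

lemma exists_petal_of_isCycle {p : (bouquet H r ι).Walk x x} (hp : p.IsCycle) :
    ∃ i, ∀ z ∈ p.support, z ∈ Set.range (petal r i) := by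
  classical
  by_cases hnone : none ∈ p.support
  · suffices ∃ i, ∀ z ∈ (p.rotate none hnone).support, z ∈ Set.range (petal r i) by
      simpa only [Walk.mem_support_rotate_iff] using this
    have hq := (Walk.isCycle_rotate hnone).2 hp
    generalize p.rotate none hnone = q at hq
    cases q with
    | nil => exact absurd hq Walk.not_isCycle_nil
    | cons hadj q =>
      obtain ⟨i, u, v, -, hu, hv⟩ := bouquet_adj.1 hadj
      have hnodup := hq.nodup_dropLast_support
      rw [Walk.support_cons, List.dropLast_cons_of_ne_nil q.support_ne_nil,
        List.nodup_cons] at hnodup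
      refine ⟨i, ?_⟩
      rw [Walk.support_cons, List.forall_mem_cons]
      exact ⟨⟨u, hu⟩, mem_range_petal_of_mem_support q ⟨v, hv⟩ hnodup.1⟩
  · rcases x with _ | ⟨i, w, hw⟩
    · exact absurd p.start_mem_support hnone
    · exact ⟨i, mem_range_petal_of_mem_support p ⟨w, petal_of_ne hw⟩
        fun h => hnone (List.mem_of_mem_dropLast h)⟩

lemma isCycle_map_foldHom {p : (bouquet H r ι).Walk x x} (hp : p.IsCycle) :
    (p.map (foldHom H r ι)).IsCycle := by
  obtain ⟨i, hi⟩ := exists_petal_of_isCycle hp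
  exact isCycle_map_of_injOn hp ((fold_injOn_range_petal r i).mono hi)

lemma egirth_bouquet [Nonempty ι] : (bouquet H r ι).egirth = H.egirth := by
  refine le_antisymm isContained_bouquet.egirth_le (le_egirth.2 fun x p hp => ?_)
  rw [← p.length_map (foldHom H r ι)]
  exact egirth_le_length (isCycle_map_foldHom hp)

lemma map_petal_edges_map_foldHom {p : (bouquet H r ι).Walk x y}
    (hp : ∀ z ∈ p.support, z ∈ Set.range (petal r i)) :
    (p.map (foldHom H r ι)).edges.map (Sym2.map (petal r i)) = p.edges := by
  have petal_fold (z) (hz : z ∈ Set.range (petal r i)) : petal r i (fold r ι z) = z := by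
    obtain ⟨w, rfl⟩ := hz
    rw [fold_leftInverse_petal r i w]
  rw [Walk.edges_map, List.map_map]
  refine (List.map_congr_left fun e he => ?_).trans (List.map_id _)
  rw [Function.comp_apply, Sym2.map_map]
  refine (Sym2.map_congr fun z hz => ?_).trans (congrFun Sym2.map_id e)
  exact petal_fold z (hp z (p.mem_support_of_mem_edges he hz))

lemma index_eq_of_mem_edges {x' y' : Bouquet r ι} {p : (bouquet H r ι).Walk x y}
    {q : (bouquet H r ι).Walk x' y'} (hp : ∀ z ∈ p.support, z ∈ Set.range (petal r i))
    (hq : ∀ z ∈ q.support, z ∈ Set.range (petal r j)) {e : Sym2 (Bouquet r ι)}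
    (hep : e ∈ p.edges) (heq : e ∈ q.edges) : i = j := by
  obtain ⟨z, hze, hz⟩ : ∃ z ∈ e, z ≠ none := by
    induction e with
    | h z w =>
      rcases eq_or_ne z none with rfl | hz
      · exact ⟨w, Sym2.mem_mk_right _ _, (p.adj_of_mem_edges hep).ne'⟩
      · exact ⟨z, Sym2.mem_mk_left _ _, hz⟩
  obtain ⟨u, rfl⟩ := hp z (p.mem_support_of_mem_edges hep hze)
  obtain ⟨v, hv⟩ := hq _ (q.mem_support_of_mem_edges heq hze)
  exact index_eq_of_petal_eq hv.symm hz

lemma IsCactus.bouquet [Nonempty ι] (hH : IsCactus H) : IsCactus (bouquet H r ι) := by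
  refine ⟨connected_bouquet hH.1, ?_⟩
  rintro x y p q hp hq ⟨e, hep, heq⟩ e'
  obtain ⟨i, hi⟩ := exists_petal_of_isCycle hp
  obtain ⟨j, hj⟩ := exists_petal_of_isCycle hq
  obtain rfl := index_eq_of_mem_edges hi hj hep heq
  have hfold := hH.2 _ _ _ _ (isCycle_map_foldHom hp) (isCycle_map_foldHom hq)
    ⟨e.map (fold r ι), by
      rw [Walk.edges_map, Walk.edges_map]
      exact ⟨List.mem_map_of_mem hep, List.mem_map_of_mem heq⟩⟩
  rw [← map_petal_edges_map_foldHom hi, ← map_petal_edges_map_foldHom hj]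
  simp only [List.mem_map, hfold]

lemma IsSeparatingList.bouquet [Nonempty ι] {S : Finset ℕ} {L : ι → W → Finset ℕ}
    (hL : ∀ i, IsSeparatingList H a c (L i)) (hr : ∀ i, L i r = S) :
    IsSeparatingList (bouquet H r ι) a c (glue r S L) where
  card_eq x := by
    obtain ⟨i, w, rfl⟩ := exists_petal_eq x
    rw [glue_petal hr, (hL i).card_eq]
  card_inter_le x y hxy := by
    obtain ⟨i, u, v, huv, rfl, rfl⟩ := bouquet_adj.1 hxy
    rw [glue_petal hr, glue_petal hr]
    exact (hL i).card_inter_le u v huv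

lemma IsLbColoring.bouquet [Nonempty ι] {L : Bouquet r ι → Finset ℕ} {C : Finset ℕ}
    {φ : ι → W → Finset ℕ} (hφ : ∀ i, IsLbColoring H (L ∘ petal r i) b (φ i))
    (hr : ∀ i, φ i r = C) : IsLbColoring (bouquet H r ι) L b (glue r C φ) := by
  constructor
  · intro x
    obtain ⟨i, w, rfl⟩ := exists_petal_eq x
    rw [glue_petal hr]
    exact (hφ i).1 w
  · intro x y hxy
    obtain ⟨i, u, v, huv, rfl, rfl⟩ := bouquet_adj.1 hxy
    rw [glue_petal hr, glue_petal hr]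
    exact (hφ i).2 u v huv

lemma FreeChoosable.bouquet [Nonempty ι] (h : FreeChoosable H a b c) :
    FreeChoosable (bouquet H r ι) a b c := by
  classical
  rw [freeChoosable_iff_forall_freeChoosableAt] at h ⊢
  intro x L hL C hC hCb
  obtain ⟨i, w, rfl⟩ := exists_petal_eq x
  have hLi (j) : IsSeparatingList H a c (L ∘ petal r j) := hL.comp (petalHom H r j)
  obtain ⟨φ, hφ, hφw⟩ := h w _ (hLi i) C hC hCb
  have extend (j) : ∃ ψ, IsLbColoring H (L ∘ petal r j) b ψ ∧ ψ r = φ r :=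
    h r _ (hLi j) (φ r) (by simpa using (hφ.1 r).1) (hφ.1 r).2
  choose ψ hψ hψr using extend
  have hr (j) : Function.update ψ i φ j r = φ r := by
    rcases eq_or_ne j i with rfl | hj
    · rw [Function.update_self]
    · rw [Function.update_of_ne hj, hψr]
  refine ⟨glue r (φ r) (Function.update ψ i φ), .bouquet (fun j => ?_) hr, ?_⟩
  · rcases eq_or_ne j i with rfl | hj
    · rwa [Function.update_self]
    · rw [Function.update_of_ne hj]
      exact hψ j
  · rw [glue_petal hr, Function.update_self, hφw]

lemma Choosable.freeChoosableAt_of_bouquet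
    (h : Choosable (bouquet H r (Fin (a.choose b))) a b c) : FreeChoosableAt H r a b c := by
  intro L hL C hC hCb
  have hcard : #((L r).powersetCard b) = a.choose b := by rw [card_powersetCard, hL.card_eq]
  let e := Finset.equivFinOfCardEq hcard
  have exists_perm (j) : ∃ σ : Equiv.Perm ℕ, σ • L r = L r ∧ σ • C = e.symm j := by
    obtain ⟨hD, hDb⟩ := mem_powersetCard.1 (e.symm j).2
    exact exists_perm_smul_eq_and_smul_eq hC hD (hCb.trans hDb.symm)
  choose σ hσL hσC using exists_perm
  have : Nonempty (Fin (a.choose b)) := ⟨e ⟨C, mem_powersetCard.2 ⟨hC, hCb⟩⟩⟩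
  have hglue := IsSeparatingList.bouquet (fun j => hL.smul (σ j)) hσL
  obtain ⟨φ, hφ⟩ := h _ hglue.card_eq hglue.card_inter_le
  let j := e ⟨φ none, mem_powersetCard.2 (hφ.1 none)⟩
  have hj : σ j • C = φ none := by rw [hσC, Equiv.symm_apply_apply]
  have hφj := (hφ.comp (petalHom H r j)).smul (σ j)⁻¹
  change IsLbColoring H ((σ j)⁻¹ • glue r (L r) _ ∘ petal r j) b _ at hφj
  rw [glue_comp_petal (f := fun i => σ i • L) hσL, inv_smul_smul] at hφj
  refine ⟨_, hφj, ?_⟩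
  rw [Pi.smul_apply, inv_smul_eq_iff, hj]
  exact congrArg φ (petal_root r j)

theorem sep_bouquet_eq_fsep_bouquet (hba : b ≤ a) (hH : ∀ v, ∃ f : H ≃g H, f r = v) :
    sep (bouquet H r (Fin (a.choose b))) a b = fsep (bouquet H r (Fin (a.choose b))) a b := by
  have : Nonempty (Fin (a.choose b)) := Fin.pos_iff_nonempty.1 (Nat.choose_pos hba)
  have choosable_iff (c) : Choosable (bouquet H r (Fin (a.choose b))) a b c ↔
      FreeChoosable (bouquet H r (Fin (a.choose b))) a b c :=
    ⟨fun h => (h.freeChoosableAt_of_bouquet.freeChoosable hH).bouquet, fun h => h.choosable hba⟩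
  simp only [sep, fsep, choosable_iff]

end BouquetGraph

theorem exists_cactus_sep_eq_fsep (a b p : ℕ) (hb : 1 ≤ b) (hba : b ≤ a)
    (hp : 3 ≤ p) :
    ∃ (V : Type) (_ : Fintype V) (G : SimpleGraph V),
      IsCactus G ∧ G.egirth = (p : ℕ∞) ∧ sep G a b = fsep G a b := by
  obtain ⟨n, rfl⟩ := Nat.exists_eq_add_of_le' hp
  have : Nonempty (Fin (a.choose b)) := Fin.pos_iff_nonempty.1 (Nat.choose_pos hba)
  refine ⟨Bouquet 0 (Fin (a.choose b)), inferInstance, bouquet (cycleGraph (n + 3)) 0 _,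
    isCactus_cycleGraph.bouquet, egirth_bouquet.trans egirth_cycleGraph,
    sep_bouquet_eq_fsep_bouquet hba fun v => ?_⟩
  rw [cycleGraph_eq_circulantGraph]
  exact exists_circulantGraph_iso_apply_eq {1} 0 v
end
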